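/- arXiv:1709.07787 — 4 statements merged into one kernel-verified Lean document; each statement's English description precedes it below -/
import Mathlib

section
/- Let 0 < ε < 1 and α > 0, and let D = {(x,t) ∈ ℝ² : ε·x > 0 and ε·|cos(√(1−ε²)·t)| < √(1−ε²)·sinh(ε·x)}. Then the function u(x,t) = (4/α)·artanh( (ε/√(1−ε²)) · cos(√(1−ε²)·t) / sinh(ε·x) ) is well defined on D, satisfies ∂²u/∂t² − ∂²u/∂x² + sinh(α·u)/α = 0 at every point of D, and u(x,t) → 0 as x → +∞, uniformly in t. -/
/-- The inverse hyperbolic tangent, defined for arguments in `(−1,1)`. -/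
noncomputable def artanh (x : ℝ) : ℝ := (1 / 2) * Real.log ((1 + x) / (1 - x))

theorem hasDerivAt_artanh {x : ℝ} (hx : |x| < 1) : HasDerivAt artanh (1 / (1 - x ^ 2)) x := by
  obtain ⟨h1, h2⟩ := abs_lt.mp hx
  have hp : 1 + x ≠ 0 := by linarith
  have hm : 1 - x ≠ 0 := by linarith
  have hsq : 1 - x ^ 2 ≠ 0 := by
    rw [show 1 - x ^ 2 = (1 + x) * (1 - x) by ring]
    exact mul_ne_zero hp hm
  have h := ((((hasDerivAt_id x).const_add 1).div ((hasDerivAt_id x).const_sub 1) hm).log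
    (div_ne_zero hp hm)).const_mul (1 / 2)
  refine h.congr_deriv ?_
  simp only [id, Pi.div_apply]
  field_simp
  ring

theorem sinh_four_mul_artanh {x : ℝ} (hx : |x| < 1) :
    Real.sinh (4 * artanh x) = 4 * x * (1 + x ^ 2) / (1 - x ^ 2) ^ 2 := by
  obtain ⟨h1, h2⟩ := abs_lt.mp hx
  have hp : 0 < 1 + x := by linarith
  have hm : 0 < 1 - x := by linarith
  have hsq : 1 - x ^ 2 ≠ 0 := by nlinarith
  have he : Real.exp (4 * artanh x) = ((1 + x) / (1 - x)) ^ 2 := by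
    rw [artanh, show 4 * (1 / 2 * Real.log ((1 + x) / (1 - x)))
      = ((2 : ℕ) : ℝ) * Real.log ((1 + x) / (1 - x)) by push_cast; ring, Real.exp_nat_mul,
      Real.exp_log (div_pos hp hm)]
  rw [Real.sinh_eq, Real.exp_neg, he, show 1 - x ^ 2 = (1 + x) * (1 - x) by ring]
  field_simp
  ring

/-- The second derivative of `c * artanh ∘ f`. -/
theorem deriv_deriv_const_mul_artanh {f f' : ℝ → ℝ} {f'' c y : ℝ} (hy : |f y| < 1)
    (hf : ∀ᶠ z in nhds y, HasDerivAt f (f' z) z) (hf' : HasDerivAt f' f'' y) :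
    deriv (deriv fun z => c * artanh (f z)) y =
      c * (f'' / (1 - f y ^ 2) + 2 * f y * f' y ^ 2 / (1 - f y ^ 2) ^ 2) := by
  have hfy : HasDerivAt f (f' y) y := hf.self_of_nhds
  have hlt : ∀ᶠ z in nhds y, |f z| < 1 :=
    hfy.continuousAt.abs.eventually (gt_mem_nhds hy)
  have hd : deriv (fun z => c * artanh (f z)) =ᶠ[nhds y]
      fun z => c * (f' z / (1 - f z ^ 2)) := by
    filter_upwards [hf, hlt] with z hz hz'
    refine (((hasDerivAt_artanh hz').comp z hz).const_mul c).deriv.trans ?_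
    ring
  have hsq : 1 - f y ^ 2 ≠ 0 := by
    have := (sq_lt_one_iff_abs_lt_one (f y)).mpr hy
    linarith
  rw [hd.deriv_eq]
  refine ((hf'.div ((hfy.pow 2).const_sub 1) hsq).const_mul c).deriv.trans ?_
  simp only [Pi.pow_apply]
  field_simp
  ring

/-- Let `0 < ε < 1` and `α > 0`, and let
`D = {(x,t) : ε·x > 0 ∧ ε·|cos(√(1−ε²)·t)| < √(1−ε²)·sinh(ε·x)}`. Then
`u(x,t) = (4/α)·artanh((ε/√(1−ε²))·cos(√(1−ε²)·t)/sinh(ε·x))` is well defined on `D`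
(its artanh-argument has absolute value `< 1` there), satisfies
`u_tt − u_xx + sinh(α·u)/α = 0` at every point of `D`, and `u(x,t) → 0` as `x → +∞`,
uniformly in `t`. -/
theorem sinh_gordon_solution (ε α : ℝ) (hε0 : 0 < ε) (hε1 : ε < 1) (hα : 0 < α)
    (u : ℝ → ℝ → ℝ)
    (hu : ∀ x t, u x t = (4 / α) * artanh ((ε / Real.sqrt (1 - ε ^ 2)) *
        Real.cos (Real.sqrt (1 - ε ^ 2) * t) / Real.sinh (ε * x))) :
    (∀ x t, ε * x > 0 →
      ε * |Real.cos (Real.sqrt (1 - ε ^ 2) * t)| < Real.sqrt (1 - ε ^ 2) * Real.sinh (ε * x) →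
      |(ε / Real.sqrt (1 - ε ^ 2)) * Real.cos (Real.sqrt (1 - ε ^ 2) * t)
        / Real.sinh (ε * x)| < 1) ∧
    (∀ x t, ε * x > 0 →
      ε * |Real.cos (Real.sqrt (1 - ε ^ 2) * t)| < Real.sqrt (1 - ε ^ 2) * Real.sinh (ε * x) →
      deriv (deriv (fun t' => u x t')) t - deriv (deriv (fun x' => u x' t)) x
        + Real.sinh (α * u x t) / α = 0) ∧
    (∀ δ > 0, ∃ A : ℝ, ∀ x t, A ≤ x → |u x t| < δ) := by
  have hs2 : Real.sqrt (1 - ε ^ 2) ^ 2 = 1 - ε ^ 2 := Real.sq_sqrt (by nlinarith)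
  have hs : 0 < Real.sqrt (1 - ε ^ 2) := Real.sqrt_pos.mpr (by nlinarith)
  generalize Real.sqrt (1 - ε ^ 2) = s at hu hs2 hs ⊢
  have hdom : ∀ x t, ε * x > 0 → ε * |Real.cos (s * t)| < s * Real.sinh (ε * x) →
      |ε / s * Real.cos (s * t) / Real.sinh (ε * x)| < 1 := by
    intro x t hx h
    have hS : 0 < Real.sinh (ε * x) := Real.sinh_pos_iff.mpr hx
    rw [abs_div, abs_mul, abs_of_pos hS, abs_of_pos (div_pos hε0 hs), div_lt_one hS,
      div_mul_eq_mul_div, div_lt_iff₀ hs]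
    linarith
  refine ⟨hdom, ?_, ?_⟩
  · intro x t hx h
    have hv := hdom x t hx h
    have hS : Real.sinh (ε * x) ≠ 0 := (Real.sinh_pos_iff.mpr hx).ne'
    have hlin : ∀ a z : ℝ, HasDerivAt (fun z => a * z) a z := fun a z => by
      simpa using (hasDerivAt_id z).const_mul a
    have htt := deriv_deriv_const_mul_artanh (c := 4 / α) (y := t)
      (f := fun t' => ε / s * Real.cos (s * t') / Real.sinh (ε * x))
      (f' := fun t' => -(ε * Real.sin (s * t') / Real.sinh (ε * x)))
      (f'' := -(ε * s * Real.cos (s * t) / Real.sinh (ε * x))) hv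
      (.of_forall fun z => by
        refine (((hlin s z).cos.const_mul (ε / s)).div_const _).congr_deriv ?_
        field_simp)
      (by
        refine (((hlin s t).sin.const_mul ε).div_const _).neg.congr_deriv ?_
        ring)
    have hxx := deriv_deriv_const_mul_artanh (c := 4 / α) (y := x)
      (f := fun x' => ε / s * Real.cos (s * t) / Real.sinh (ε * x'))
      (f' := fun x' => -(ε / s * Real.cos (s * t) * (ε * Real.cosh (ε * x'))
        / Real.sinh (ε * x') ^ 2))
      (f'' := ε / s * Real.cos (s * t) * ε ^ 2 *
        (2 * Real.cosh (ε * x) ^ 2 - Real.sinh (ε * x) ^ 2) / Real.sinh (ε * x) ^ 3) hv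
      (by
        have hne : ∀ᶠ z in nhds x, Real.sinh (ε * z) ≠ 0 :=
          (hlin ε x).sinh.continuousAt.eventually_ne hS
        filter_upwards [hne] with z hz
        refine ((hasDerivAt_const z (ε / s * Real.cos (s * t))).div (hlin ε z).sinh hz).congr_deriv
          ?_
        field_simp
        ring)
      (by
        refine ((((hlin ε x).cosh.const_mul ε).const_mul (ε / s * Real.cos (s * t))).div
          ((hlin ε x).sinh.pow 2) (pow_ne_zero 2 hS)).neg.congr_deriv ?_
        simp only [Pi.pow_apply]
        field_simp
        ring)
    simp only [hu]
    rw [htt, hxx, show ∀ y : ℝ, α * (4 / α * y) = 4 * y from fun y => by field_simp,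
      sinh_four_mul_artanh hv]
    have hsq : 1 - (ε / s * Real.cos (s * t) / Real.sinh (ε * x)) ^ 2 ≠ 0 := by
      have := (sq_lt_one_iff_abs_lt_one _).mpr hv
      linarith
    have hsin := Real.sin_sq (s * t)
    have hcosh := Real.cosh_sq (ε * x)
    generalize Real.sin (s * t) = p at *
    generalize Real.cos (s * t) = q at *
    generalize Real.cosh (ε * x) = C at *
    generalize Real.sinh (ε * x) = S at *
    set v := ε / s * q / S with hvdef
    have hq : q = v * s * S / ε := by rw [hvdef]; field_simp
    have e1 : -(ε * s * q / S) = -(s ^ 2 * v) := by rw [hq]; field_simp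
    have e2 : (-(ε * p / S)) ^ 2 = ε ^ 2 / S ^ 2 - s ^ 2 * v ^ 2 := by
      rw [neg_sq, div_pow, mul_pow, hsin, hq]; field_simp
    have e3 : ε / s * q * ε ^ 2 * (2 * C ^ 2 - S ^ 2) / S ^ 3 = ε ^ 2 * v * (1 + 2 / S ^ 2) := by
      rw [hcosh, hvdef]; field_simp; ring
    have e4 : (-(ε / s * q * (ε * C) / S ^ 2)) ^ 2 = ε ^ 2 * v ^ 2 * (1 + 1 / S ^ 2) := by
      rw [neg_sq, div_pow, mul_pow, mul_pow ε C, hcosh, hvdef]; field_simp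
    rw [e1, e2, e3, e4, hs2]
    field_simp
    ring
  · intro δ hδ
    have hcont : ContinuousAt (fun y => 4 / α * artanh y) 0 :=
      (hasDerivAt_artanh (by simp)).continuousAt.const_mul _
    obtain ⟨η, hη, hη'⟩ := Metric.continuousAt_iff.mp hcont δ hδ
    refine ⟨1 / (s * η) + 1, fun x t hxA => ?_⟩
    have hx : 1 / (s * η) < x := by linarith
    have hx0 : 0 < x := lt_trans (by positivity) hx
    have hS : ε * x ≤ Real.sinh (ε * x) := Real.self_le_sinh_iff.mpr (by positivity)
    have hS0 : 0 < Real.sinh (ε * x) := lt_of_lt_of_le (by positivity) hS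
    rw [hu]
    have harg : |ε / s * Real.cos (s * t) / Real.sinh (ε * x)| < η := by
      rw [abs_div, abs_mul, abs_of_pos hS0, abs_of_pos (div_pos hε0 hs), div_lt_iff₀ hS0]
      calc ε / s * |Real.cos (s * t)| ≤ ε / s * 1 := by
            gcongr
            exact Real.abs_cos_le_one _
        _ = η * (ε * (1 / (s * η))) := by field_simp
        _ < η * (ε * x) := by gcongr
        _ ≤ η * Real.sinh (ε * x) := by gcongr
    have hzero : artanh 0 = 0 := by simp [artanh]
    have hlt := hη' ((Real.dist_0_eq_abs _).trans_lt harg)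
    rwa [hzero, mul_zero, Real.dist_0_eq_abs] at hlt
end

section
/- Let g(u) = Σ_{m≥1} g_m u^m be an entire function with real coefficients, g₁ = 1, and assume λ := (5/6)g₂² − (3/4)g₃ > 0; set S(ξ) = √(2/λ)/cosh(ξ). Then there exists a sequence of smooth functions v_k : ℝ² → ℝ (k ≥ 1, arguments (τ, ξ)), with v₀ := 0, such that: (a) v₁(τ,ξ) = S(ξ)·cos τ; (b) each v_k is 2π-periodic in τ, even in τ, even in ξ, and v_k(τ,ξ) → 0 as |ξ| → ∞ uniformly in τ; (c) for each k there exist real polynomials a_{kq}, 0 ≤ q ≤ k, with a_{kq} = 0 whenever k + q is odd, deg a_{kq} ≤ k, a_{kq} containing only monomials of degree congruent to k mod 2, and a_{kq}(0) = 0 (so each a_{kq}(S) is divisible by S), such that v_k(τ,ξ) = Σ_{q=0}^{k} a_{kq}(S(ξ))·cos(qτ); and (d) for every m ≥ 1, with v_j := 0 for j ≤ 0: ∂²_τ v_m + v_m − (∂²_τ + ∂²_ξ) v_{m−2} + Σ_{j=2}^{m} g_j · Σ_{(k₁,…,k_j) ∈ (ℤ_{≥1})^j, k₁+⋯+k_j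 = m} v_{k₁}·v_{k₂}·⋯·v_{k_j} = 0 identically on ℝ². -/
open PowerSeries in
/-- The coefficient of `X ^ m` in the `j`-th power of the generating series of `w`. -/
noncomputable def convPow {R : Type*} [CommRing R] (w : ℕ → R) (j m : ℕ) : R :=
  coeff m (mk w ^ j)

section convPow

variable {R : Type*} [CommRing R]

open PowerSeries

lemma convPow_eq_sum (w : ℕ → R) (j m : ℕ) :
    convPow w j m = ∑ c ∈ Finset.Nat.antidiagonalTuple j m, ∏ i, w (c i) := by
  have h : mk w ^ j = ∏ _i : Fin j, mk w := by simp
  rw [convPow, h, coeff_prod]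
  refine Finset.sum_nbij' (fun f => ⇑f) (fun c => Finsupp.equivFunOnFinite.symm c) ?_ ?_ ?_ ?_ ?_
  · intro f hf
    simpa [Finset.Nat.mem_antidiagonalTuple] using hf
  · intro f hf
    simpa [Finset.Nat.mem_antidiagonalTuple] using hf
  · intro f _
    ext; simp
  · intro f _
    ext; simp
  · intro f _
    simp

lemma convPow_eq_sum_filter {w : ℕ → R} (hw : w 0 = 0) (j m : ℕ) :
    convPow w j m = ∑ c ∈ (Finset.Nat.antidiagonalTuple j m).filter (fun c => ∀ i, c i ≠ 0),
      ∏ i, w (c i) := by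
  rw [convPow_eq_sum, Finset.sum_filter_of_ne]
  intro c _ hc i hi
  exact hc (Finset.prod_eq_zero (Finset.mem_univ i) (by rw [hi, hw]))

lemma convPow_congr {w w' : ℕ → R} (hw : w 0 = 0) {j m : ℕ} (hj : 2 ≤ j) (hm : 1 ≤ m)
    (h : ∀ k < m, w k = w' k) : convPow w j m = convPow w' j m := by
  rw [convPow_eq_sum_filter hw, convPow_eq_sum_filter (by rw [← h 0 hm, hw])]
  refine Finset.sum_congr rfl fun c hc => Finset.prod_congr rfl fun i _ => h _ ?_
  simp only [Finset.mem_filter, Finset.Nat.mem_antidiagonalTuple] at hc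
  have : Nontrivial (Fin j) := Fin.nontrivial_iff_two_le.2 hj
  obtain ⟨i', hi'⟩ := exists_ne i
  rw [← hc.1]
  exact Finset.single_lt_sum hi' (Finset.mem_univ _) (Finset.mem_univ _)
    (Nat.pos_of_ne_zero (hc.2 i')) (by simp)

lemma mk_eq_X_mul {w : ℕ → R} (hw : w 0 = 0) : mk w = X * mk (fun k => w (k + 1)) := by
  ext n
  cases n with
  | zero => simp [hw]
  | succ n => simp [coeff_succ_X_mul]

lemma convPow_add_sub {w : ℕ → R} (hw : w 0 = 0) {N : ℕ} (b d : R) (j : ℕ) :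
    ∃ r : R⟦X⟧, mk (w + Pi.single (N + 1) b + Pi.single (N + 2) d) ^ j - mk w ^ j =
      X ^ (j + N) * ((j : R⟦X⟧) * mk (fun k => w (k + 1)) ^ (j - 1) * (C b + C d * X)
        + X ^ N * r) := by
  set y := mk (fun k => w (k + 1))
  have h : mk (w + Pi.single (N + 1) b + Pi.single (N + 2) d)
      = X * (y + X ^ N * (C b + C d * X)) := by
    have h1 : mk (w + Pi.single (N + 1) b + Pi.single (N + 2) d)
      = mk w + C b * X ^ (N + 1) + C d * X ^ (N + 2) := by
      ext n
      simp [Pi.single_apply, coeff_X_pow]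
    rw [h1, mk_eq_X_mul hw]
    ring
  obtain ⟨k, hk⟩ := Polynomial.powAddExpansion y (X ^ N * (C b + C d * X)) j
  refine ⟨k * (C b + C d * X) ^ 2, ?_⟩
  rw [h, mk_eq_X_mul hw, mul_pow, mul_pow, hk]
  ring

lemma convPow_perturb_succ {w : ℕ → R} (hw : w 0 = 0) {N : ℕ} (hN : 2 ≤ N) (b d : R) (j : ℕ)
    (hj : 2 ≤ j) :
    convPow (w + Pi.single (N + 1) b + Pi.single (N + 2) d) j (N + 2) =
      convPow w j (N + 2) + if j = 2 then 2 * w 1 * b else 0 := by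
  obtain ⟨r, hr⟩ := convPow_add_sub (N := N) hw b d j
  rw [← sub_eq_iff_eq_add', convPow, convPow, ← map_sub, hr, coeff_X_pow_mul']
  obtain rfl | hj : j = 2 ∨ 3 ≤ j := by omega
  · rw [if_pos (by omega), show N + 2 - (2 + N) = 0 by omega]
    have : constantCoeff (2 : R⟦X⟧) = 2 := map_ofNat _ 2
    simp [show N ≠ 0 by omega, mul_assoc, this]
  · rw [if_neg (by omega), if_neg (by omega)]

lemma convPow_perturb_succ_succ {w : ℕ → R} (hw : w 0 = 0) {N : ℕ} (hN : 2 ≤ N) (b d : R)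
    (j : ℕ) (hj : 2 ≤ j) :
    convPow (w + Pi.single (N + 1) b + Pi.single (N + 2) d) j (N + 3) =
      convPow w j (N + 3) + ((if j = 2 then 2 * (w 1 * d + w 2 * b) else 0) +
        if j = 3 then 3 * w 1 ^ 2 * b else 0) := by
  obtain ⟨r, hr⟩ := convPow_add_sub (N := N) hw b d j
  rw [← sub_eq_iff_eq_add', convPow, convPow, ← map_sub, hr, coeff_X_pow_mul']
  obtain rfl | rfl | hj : j = 2 ∨ j = 3 ∨ 4 ≤ j := by omega
  · rw [if_pos (by omega), show N + 3 - (2 + N) = 1 by omega, map_add, coeff_X_pow_mul',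
      if_neg (by omega)]
    have : ((2 : ℕ) : R⟦X⟧) * mk (fun k => w (k + 1)) ^ (2 - 1) * (C b + C d * X) =
        C (2 * b) * mk (fun k => w (k + 1)) + C (2 * d) * (X * mk (fun k => w (k + 1))) := by
      simp only [map_mul, map_ofNat]
      push_cast
      ring
    rw [this, map_add, coeff_C_mul, coeff_C_mul, coeff_succ_X_mul]
    simp
    ring
  · rw [if_pos (by omega), show N + 3 - (3 + N) = 0 by omega]
    have : constantCoeff (3 : R⟦X⟧) = 3 := map_ofNat _ 3
    simp [show N ≠ 0 by omega, this]
  · rw [if_neg (by omega), if_neg (by omega), if_neg (by omega), add_zero]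

lemma convPow_self {w : ℕ → R} (hw : w 0 = 0) (j : ℕ) : convPow w j j = w 1 ^ j := by
  rw [convPow, mk_eq_X_mul hw, mul_pow, coeff_X_pow_mul', if_pos le_rfl, Nat.sub_self]
  simp

lemma convPow_two_three {w : ℕ → R} (hw : w 0 = 0) : convPow w 2 3 = 2 * w 1 * w 2 := by
  rw [convPow, mk_eq_X_mul hw, mul_pow, coeff_X_pow_mul', if_pos (by norm_num), pow_two, coeff_mul,
    Finset.Nat.antidiagonal_succ]
  simp
  ring

end convPow

/-- The function `S(ξ) ^ n * cos (q τ)`. -/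
noncomputable def trigMon (S : ℝ → ℝ) (p : ℕ × ℕ) : ℝ → ℝ → ℝ :=
  fun τ ξ => S ξ ^ p.1 * Real.cos (p.2 * τ)

/-- The linear span of the functions `S(ξ) ^ n * cos (q τ)` with `(n, q) ∈ Z`. -/
noncomputable def trigSpan (S : ℝ → ℝ) (Z : Set (ℕ × ℕ)) : Submodule ℝ (ℝ → ℝ → ℝ) :=
  Submodule.span ℝ (trigMon S '' Z)

/-- Exponents `(n, q)` with `d ≤ n ≤ k`, `q ≤ k` and `n ≡ q ≡ k` modulo `2`. -/
def gradedIdx (d k : ℕ) : Set (ℕ × ℕ) :=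
  {p | d ≤ p.1 ∧ p.1 ≤ k ∧ p.2 ≤ k ∧ p.1 % 2 = k % 2 ∧ p.2 % 2 = k % 2}

/-- The exponents in `gradedIdx d k` with `q ≠ 1`. -/
def nonresIdx (d k : ℕ) : Set (ℕ × ℕ) := {p | p ∈ gradedIdx d k ∧ p.2 ≠ 1}

/-- The exponents in `gradedIdx d k` with `q = 1`. -/
def resIdx (d k : ℕ) : Set (ℕ × ℕ) := {p | p ∈ gradedIdx d k ∧ p.2 = 1}

/-- Functions of two real variables that are jointly smooth. -/
def smoothFun : Submodule ℝ (ℝ → ℝ → ℝ) where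
  carrier := {f | ContDiff ℝ (⊤ : ℕ∞) fun p : ℝ × ℝ => f p.1 p.2}
  add_mem' {f g} hf hg := by
    rw [Set.mem_ofPred_eq] at hf hg ⊢
    exact hf.add hg
  zero_mem' := by
    rw [Set.mem_ofPred_eq]
    exact contDiff_const
  smul_mem' c f hf := by
    rw [Set.mem_ofPred_eq] at hf ⊢
    exact hf.const_smul c

/-- The operator `∂²_τ + 1`. -/
noncomputable def tauOp (f : ℝ → ℝ → ℝ) : ℝ → ℝ → ℝ :=
  fun τ ξ => deriv (deriv fun τ' => f τ' ξ) τ + f τ ξ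

/-- The operator `∂²_τ + ∂²_ξ`. -/
noncomputable def lapOp (f : ℝ → ℝ → ℝ) : ℝ → ℝ → ℝ :=
  fun τ ξ => deriv (deriv fun τ' => f τ' ξ) τ + deriv (deriv fun ξ' => f τ ξ') ξ

lemma mem_smoothFun {f : ℝ → ℝ → ℝ} :
    f ∈ smoothFun ↔ ContDiff ℝ (⊤ : ℕ∞) fun p : ℝ × ℝ => f p.1 p.2 := Iff.rfl

lemma smoothFun.contDiff_left {f : ℝ → ℝ → ℝ} (hf : f ∈ smoothFun) (ξ : ℝ) :
    ContDiff ℝ (⊤ : ℕ∞) fun τ => f τ ξ :=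
  ContDiff.comp (g := fun p : ℝ × ℝ => f p.1 p.2) (mem_smoothFun.1 hf) (contDiff_id.prodMk contDiff_const)

lemma smoothFun.contDiff_right {f : ℝ → ℝ → ℝ} (hf : f ∈ smoothFun) (τ : ℝ) :
    ContDiff ℝ (⊤ : ℕ∞) fun ξ => f τ ξ :=
  ContDiff.comp (g := fun p : ℝ × ℝ => f p.1 p.2) (mem_smoothFun.1 hf) (contDiff_const.prodMk contDiff_id)

lemma deriv_deriv_add {f g : ℝ → ℝ} (hf : ContDiff ℝ (⊤ : ℕ∞) f) (hg : ContDiff ℝ (⊤ : ℕ∞) g)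
    (x : ℝ) : deriv (deriv fun y => f y + g y) x = deriv (deriv f) x + deriv (deriv g) x := by
  have h : (deriv fun y => f y + g y) = fun y => deriv f y + deriv g y := by
    ext y
    exact deriv_fun_add (hf.differentiable (by simp) y) (hg.differentiable (by simp) y)
  have h' (f : ℝ → ℝ) (hf : ContDiff ℝ (⊤ : ℕ∞) f) : Differentiable ℝ (deriv f) :=
    (contDiff_infty_iff_deriv.1 hf).2.differentiable (by simp)
  rw [h]
  exact deriv_fun_add (h' f hf x) (h' g hg x)

lemma deriv_deriv_const_mul (c : ℝ) (f : ℝ → ℝ) (x : ℝ) :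
    deriv (deriv fun y => c * f y) x = c * deriv (deriv f) x := by
  have h : (deriv fun y => c * f y) = fun y => c * deriv f y := by
    ext y
    simp
  rw [h]
  simp

lemma tauOp_add {f g : ℝ → ℝ → ℝ} (hf : f ∈ smoothFun) (hg : g ∈ smoothFun) :
    tauOp (f + g) = tauOp f + tauOp g := by
  ext τ ξ
  simp only [tauOp, Pi.add_apply]
  rw [deriv_deriv_add (smoothFun.contDiff_left hf ξ) (smoothFun.contDiff_left hg ξ)]
  ring

lemma lapOp_add {f g : ℝ → ℝ → ℝ} (hf : f ∈ smoothFun) (hg : g ∈ smoothFun) :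
    lapOp (f + g) = lapOp f + lapOp g := by
  ext τ ξ
  simp only [lapOp, Pi.add_apply]
  rw [deriv_deriv_add (smoothFun.contDiff_left hf ξ) (smoothFun.contDiff_left hg ξ),
    deriv_deriv_add (smoothFun.contDiff_right hf τ) (smoothFun.contDiff_right hg τ)]
  ring

lemma tauOp_smul (c : ℝ) (f : ℝ → ℝ → ℝ) : tauOp (c • f) = c • tauOp f := by
  ext τ ξ
  simp only [tauOp, Pi.smul_apply, smul_eq_mul, deriv_deriv_const_mul]
  ring

lemma lapOp_smul (c : ℝ) (f : ℝ → ℝ → ℝ) : lapOp (c • f) = c • lapOp f := by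
  ext τ ξ
  simp only [lapOp, Pi.smul_apply, smul_eq_mul, deriv_deriv_const_mul]
  ring

lemma tauOp_zero : tauOp 0 = 0 := by simpa using tauOp_smul 0 0

lemma lapOp_zero : lapOp 0 = 0 := by simpa using lapOp_smul 0 0

lemma deriv_deriv_cos_mul (q x : ℝ) :
    deriv (deriv fun y => Real.cos (q * y)) x = -q ^ 2 * Real.cos (q * x) := by
  have hq (y : ℝ) : HasDerivAt (fun y => q * y) q y := by simpa using (hasDerivAt_id y).const_mul q
  have h : (deriv fun y => Real.cos (q * y)) = fun y => -Real.sin (q * y) * q := by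
    ext y
    exact (hq y).cos.deriv
  rw [h]
  refine ((hq x).sin.fun_neg.mul_const q).deriv.trans ?_
  ring

section trigSpan

variable {S : ℝ → ℝ}

lemma trigSpan_mono {Z Z' : Set (ℕ × ℕ)} (h : Z ⊆ Z') : trigSpan S Z ≤ trigSpan S Z' :=
  Submodule.span_mono (Set.image_mono h)

lemma trigMon_mem {Z : Set (ℕ × ℕ)} {p : ℕ × ℕ} (h : p ∈ Z) : trigMon S p ∈ trigSpan S Z :=
  Submodule.subset_span (Set.mem_image_of_mem _ h)

@[elab_as_elim]
lemma trigSpan_induction {Z : Set (ℕ × ℕ)} {P : (f : ℝ → ℝ → ℝ) → f ∈ trigSpan S Z → Prop}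
    (mon : ∀ p (hp : p ∈ Z), P (trigMon S p) (trigMon_mem hp)) (zero : P 0 (zero_mem _))
    (add : ∀ f hf g hg, P f hf → P g hg → P (f + g) (add_mem hf hg))
    (smul : ∀ (c : ℝ) f hf, P f hf → P (c • f) (Submodule.smul_mem _ c hf)) {f : ℝ → ℝ → ℝ}
    (hf : f ∈ trigSpan S Z) : P f hf := by
  refine Submodule.span_induction ?_ zero (fun f g hf hg => add f hf g hg)
    (fun c f hf => smul c f hf) hf
  rintro _ ⟨p, hp, rfl⟩
  exact mon p hp

lemma nonresIdx_subset (d k : ℕ) : nonresIdx d k ⊆ gradedIdx d k := fun _ h => h.1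

lemma trigSpan_gradedIdx_anti {d d' : ℕ} (h : d' ≤ d) (k : ℕ) :
    trigSpan S (gradedIdx d k) ≤ trigSpan S (gradedIdx d' k) :=
  trigSpan_mono fun _ hp => ⟨h.trans hp.1, hp.2⟩

lemma trigMon_mul (n q n' q' : ℕ) (h : q' ≤ q) :
    trigMon S (n, q) * trigMon S (n', q') =
      (1 / 2 : ℝ) • trigMon S (n + n', q + q') + (1 / 2 : ℝ) • trigMon S (n + n', q - q') := by
  ext τ ξ
  simp only [trigMon, Pi.mul_apply, Pi.add_apply, Pi.smul_apply, smul_eq_mul]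
  push_cast [h]
  rw [add_mul, sub_mul, Real.cos_add, Real.cos_sub]
  ring

lemma trigMon_one : trigMon S (0, 0) = 1 := by
  ext τ ξ
  simp [trigMon]

lemma mul_mem_gradedIdx {d k d' k' : ℕ} {f g : ℝ → ℝ → ℝ} (hf : f ∈ trigSpan S (gradedIdx d k))
    (hg : g ∈ trigSpan S (gradedIdx d' k')) :
    f * g ∈ trigSpan S (gradedIdx (d + d') (k + k')) := by
  have key : trigSpan S (gradedIdx d k) * trigSpan S (gradedIdx d' k') ≤
      trigSpan S (gradedIdx (d + d') (k + k')) := by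
    rw [trigSpan, trigSpan, Submodule.span_mul_span, Submodule.span_le]
    rintro _ ⟨_, ⟨⟨n, q⟩, hp, rfl⟩, _, ⟨⟨n', q'⟩, hp', rfl⟩, rfl⟩
    simp only [gradedIdx, Set.mem_ofPred_eq] at hp hp'
    dsimp only
    rcases le_total q' q with h | h
    · rw [trigMon_mul _ _ _ _ h]
      refine add_mem (Submodule.smul_mem _ _ (trigMon_mem ?_))
        (Submodule.smul_mem _ _ (trigMon_mem ?_)) <;>
      simp only [gradedIdx, Set.mem_ofPred_eq] <;> omega
    · rw [mul_comm, trigMon_mul _ _ _ _ h]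
      refine add_mem (Submodule.smul_mem _ _ (trigMon_mem ?_))
        (Submodule.smul_mem _ _ (trigMon_mem ?_)) <;>
      simp only [gradedIdx, Set.mem_ofPred_eq] <;> omega
  exact key (Submodule.mul_mem_mul hf hg)

lemma convPow_mem_gradedIdx {w : ℕ → ℝ → ℝ → ℝ} (hw : ∀ k, w k ∈ trigSpan S (gradedIdx 1 k))
    (j m : ℕ) : convPow w j m ∈ trigSpan S (gradedIdx j m) := by
  induction j generalizing m with
  | zero =>
    rw [convPow, pow_zero, PowerSeries.coeff_one]
    split_ifs with h
    · rw [← trigMon_one (S := S), h]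
      exact trigMon_mem (by simp [gradedIdx])
    · exact zero_mem _
  | succ j ih =>
    rw [convPow, pow_succ, PowerSeries.coeff_mul]
    refine sum_mem fun c hc => ?_
    rw [Finset.HasAntidiagonal.mem_antidiagonal] at hc
    rw [← hc, PowerSeries.coeff_mk]
    exact mul_mem_gradedIdx (ih c.1) (hw c.2)

lemma trigSpan_le_smoothFun (hS : ContDiff ℝ (⊤ : ℕ∞) S) (Z : Set (ℕ × ℕ)) :
    trigSpan S Z ≤ smoothFun := by
  rw [trigSpan, Submodule.span_le]
  rintro _ ⟨p, -, rfl⟩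
  change ContDiff ℝ (⊤ : ℕ∞) fun x : ℝ × ℝ => S x.2 ^ p.1 * Real.cos (p.2 * x.1)
  fun_prop

lemma tauOp_trigMon (n q : ℕ) :
    tauOp (trigMon S (n, q)) = (1 - (q : ℝ) ^ 2) • trigMon S (n, q) := by
  ext τ ξ
  simp only [tauOp, trigMon, deriv_deriv_const_mul, deriv_deriv_cos_mul, Pi.smul_apply,
    smul_eq_mul]
  ring

lemma lapOp_trigMon {lam : ℝ} (hS2 : ∀ (n : ℕ) ξ, deriv (deriv fun x => S x ^ n) ξ =
      n ^ 2 * S ξ ^ n - lam * (n * (n + 1) / 2) * S ξ ^ (n + 2)) (n q : ℕ) :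
    lapOp (trigMon S (n, q)) = ((n : ℝ) ^ 2 - q ^ 2) • trigMon S (n, q) -
      (lam * (n * (n + 1) / 2)) • trigMon S (n + 2, q) := by
  ext τ ξ
  have h : (fun x => S x ^ n * Real.cos (q * τ)) = fun x => Real.cos (q * τ) * S x ^ n := by
    ext x
    ring
  simp only [lapOp, trigMon, deriv_deriv_const_mul, deriv_deriv_cos_mul, Pi.smul_apply,
    smul_eq_mul, Pi.sub_apply, h, hS2]
  ring

lemma lapOp_mem (hS : ContDiff ℝ (⊤ : ℕ∞) S) {lam : ℝ}
    (hS2 : ∀ (n : ℕ) ξ, deriv (deriv fun x => S x ^ n) ξ =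
      n ^ 2 * S ξ ^ n - lam * (n * (n + 1) / 2) * S ξ ^ (n + 2)) {Z Z' : Set (ℕ × ℕ)}
    (h : Z ⊆ Z') (h' : ∀ p ∈ Z, (p.1 + 2, p.2) ∈ Z')
    {f : ℝ → ℝ → ℝ} (hf : f ∈ trigSpan S Z) : lapOp f ∈ trigSpan S Z' := by
  induction hf using trigSpan_induction with
  | mon p hp =>
    rw [lapOp_trigMon hS2]
    exact sub_mem (Submodule.smul_mem _ _ (trigMon_mem (h hp)))
      (Submodule.smul_mem _ _ (trigMon_mem (h' p hp)))
  | zero => rw [lapOp_zero]; exact zero_mem _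
  | add f hf g hg ihf ihg =>
    rw [lapOp_add (trigSpan_le_smoothFun hS _ hf) (trigSpan_le_smoothFun hS _ hg)]
    exact add_mem ihf ihg
  | smul c f hf ih =>
    rw [lapOp_smul]
    exact Submodule.smul_mem _ _ ih

lemma exists_tauOp_eq (hS : ContDiff ℝ (⊤ : ℕ∞) S) {Z : Set (ℕ × ℕ)} (hZ : ∀ p ∈ Z, p.2 ≠ 1)
    {f : ℝ → ℝ → ℝ} (hf : f ∈ trigSpan S Z) : ∃ G ∈ trigSpan S Z, tauOp G = f := by
  induction hf using trigSpan_induction with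
  | mon p hp =>
    refine ⟨(1 - (p.2 : ℝ) ^ 2)⁻¹ • trigMon S p, Submodule.smul_mem _ _ (trigMon_mem hp), ?_⟩
    have h : (1 - (p.2 : ℝ) ^ 2) ≠ 0 := by
      have h1 : (p.2 : ℝ) ≠ 1 := by exact_mod_cast hZ p hp
      have h2 : (1 + (p.2 : ℝ)) ≠ 0 := by positivity
      rw [show (1 - (p.2 : ℝ) ^ 2) = (1 - p.2) * (1 + p.2) by ring]
      exact mul_ne_zero (sub_ne_zero.2 h1.symm) h2
    rw [tauOp_smul, tauOp_trigMon, smul_smul, inv_mul_cancel₀ h, one_smul]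
  | zero => exact ⟨0, zero_mem _, tauOp_zero⟩
  | add f _ g _ ihf ihg =>
    obtain ⟨F, hF, rfl⟩ := ihf
    obtain ⟨G, hG, rfl⟩ := ihg
    exact ⟨F + G, add_mem hF hG,
      tauOp_add (trigSpan_le_smoothFun hS _ hF) (trigSpan_le_smoothFun hS _ hG)⟩
  | smul c f _ ih =>
    obtain ⟨F, hF, rfl⟩ := ih
    exact ⟨c • F, Submodule.smul_mem _ _ hF, tauOp_smul c F⟩

lemma gradedIdx_eq_nonresIdx {k : ℕ} (hk : Even k) (d : ℕ) : gradedIdx d k = nonresIdx d k := by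
  ext p
  simp only [nonresIdx, gradedIdx, Set.mem_ofPred_eq]
  rw [Nat.even_iff] at hk
  omega

lemma exists_add_of_mem_gradedIdx {d k : ℕ} {f : ℝ → ℝ → ℝ}
    (hf : f ∈ trigSpan S (gradedIdx d k)) :
    ∃ r ∈ trigSpan S (resIdx d k), ∃ G ∈ trigSpan S (nonresIdx d k), f = r + G := by
  have h : gradedIdx d k = resIdx d k ∪ nonresIdx d k := by
    ext p
    simp only [nonresIdx, resIdx, Set.mem_ofPred_eq, Set.mem_union]
    tauto
  rw [h, trigSpan, Set.image_union, Submodule.span_union, Submodule.mem_sup] at hf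
  obtain ⟨r, hr, G, hG, h⟩ := hf
  exact ⟨r, hr, G, hG, h.symm⟩

end trigSpan

/-- The right-hand side of the equation `(∂²_τ + 1) w_m = forcing g w m` obtained by isolating the
linear part of the `m`-th equation of the hierarchy. -/
noncomputable def forcing (g : ℕ → ℝ) (w : ℕ → ℝ → ℝ → ℝ) (m : ℕ) : ℝ → ℝ → ℝ :=
  lapOp (w (m - 2)) - ∑ j ∈ Finset.Icc 2 m, g j • convPow w j m

lemma forcing_congr (g : ℕ → ℝ) {w w' : ℕ → ℝ → ℝ → ℝ} (hw : w 0 = 0) {m : ℕ} (hm : 1 ≤ m)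
    (h : ∀ k < m, w k = w' k) : forcing g w m = forcing g w' m := by
  rw [forcing, forcing, h (m - 2) (by omega)]
  congr 1
  refine Finset.sum_congr rfl fun j hj => ?_
  rw [convPow_congr hw (Finset.mem_Icc.1 hj).1 hm h]

lemma forcing_perturb_succ (g : ℕ → ℝ) {w : ℕ → ℝ → ℝ → ℝ} (hw : w 0 = 0) {N : ℕ} (hN : 2 ≤ N)
    (b d : ℝ → ℝ → ℝ) :
    forcing g (w + Pi.single (N + 1) b + Pi.single (N + 2) d) (N + 2) =
      forcing g w (N + 2) - g 2 • (2 * w 1 * b) := by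
  have h : ∑ j ∈ Finset.Icc 2 (N + 2),
      g j • convPow (w + Pi.single (N + 1) b + Pi.single (N + 2) d) j (N + 2) =
      ∑ j ∈ Finset.Icc 2 (N + 2), g j • convPow w j (N + 2) + g 2 • (2 * w 1 * b) := by
    rw [Finset.sum_congr rfl fun j hj => by
      rw [convPow_perturb_succ hw hN b d j (Finset.mem_Icc.1 hj).1, smul_add, smul_ite, smul_zero]]
    rw [Finset.sum_add_distrib, Finset.sum_ite_eq', if_pos (by simp)]
  rw [forcing, forcing, h]
  simp [sub_sub]

lemma forcing_perturb_succ_succ (g : ℕ → ℝ) {w : ℕ → ℝ → ℝ → ℝ} (hw : w 0 = 0) {N : ℕ}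
    (hN : 2 ≤ N) {b : ℝ → ℝ → ℝ} (d : ℝ → ℝ → ℝ) (hb : b ∈ smoothFun)
    (hwN : w (N + 1) ∈ smoothFun) :
    forcing g (w + Pi.single (N + 1) b + Pi.single (N + 2) d) (N + 3) =
      forcing g w (N + 3) + (lapOp b - g 2 • (2 * (w 1 * d + w 2 * b))
        - g 3 • (3 * w 1 ^ 2 * b)) := by
  have h : ∑ j ∈ Finset.Icc 2 (N + 3),
      g j • convPow (w + Pi.single (N + 1) b + Pi.single (N + 2) d) j (N + 3) =
      ∑ j ∈ Finset.Icc 2 (N + 3), g j • convPow w j (N + 3) +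
        (g 2 • (2 * (w 1 * d + w 2 * b)) + g 3 • (3 * w 1 ^ 2 * b)) := by
    rw [Finset.sum_congr rfl fun j hj => by
      rw [convPow_perturb_succ_succ hw hN b d j (Finset.mem_Icc.1 hj).1, smul_add, smul_add,
        smul_ite, smul_ite, smul_zero]]
    rw [Finset.sum_add_distrib, Finset.sum_add_distrib, Finset.sum_ite_eq', Finset.sum_ite_eq',
      if_pos (by simp), if_pos (by simp)]
  have h' : (w + Pi.single (N + 1) b + Pi.single (N + 2) d : ℕ → ℝ → ℝ → ℝ) (N + 3 - 2) =
      w (N + 1) + b := by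
    simp
  rw [forcing, forcing, h, h', lapOp_add hwN hb, show N + 3 - 2 = N + 1 by omega]
  abel

/-- The second term of the formal solution. -/
noncomputable def secondTerm (S : ℝ → ℝ) (g₂ : ℝ) : ℝ → ℝ → ℝ :=
  (-g₂ / 2) • trigMon S (2, 0) + (g₂ / 6) • trigMon S (2, 2)

/-- The change of the forcing two orders higher when `b` and its response `d` are added to two
consecutive terms of the formal solution. -/
noncomputable def forcingShift (S : ℝ → ℝ) (g₂ g₃ : ℝ) (b d : ℝ → ℝ → ℝ) : ℝ → ℝ → ℝ :=
  lapOp b - g₂ • (2 * (trigMon S (1, 1) * d + secondTerm S g₂ * b))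
    - g₃ • (3 * trigMon S (1, 1) ^ 2 * b)

section Step

variable {S : ℝ → ℝ}

lemma forcingShift_add (g₂ g₃ : ℝ) {b b' : ℝ → ℝ → ℝ} (hb : b ∈ smoothFun) (hb' : b' ∈ smoothFun)
    (d d' : ℝ → ℝ → ℝ) : forcingShift S g₂ g₃ (b + b') (d + d') =
      forcingShift S g₂ g₃ b d + forcingShift S g₂ g₃ b' d' := by
  rw [forcingShift, lapOp_add hb hb', forcingShift, forcingShift]
  simp only [mul_add, smul_add]
  abel

lemma forcingShift_smul (g₂ g₃ c : ℝ) (b d : ℝ → ℝ → ℝ) :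
    forcingShift S g₂ g₃ (c • b) (c • d) = c • forcingShift S g₂ g₃ b d := by
  rw [forcingShift, lapOp_smul, forcingShift]
  simp only [mul_add, smul_add, mul_smul_comm, smul_sub, smul_comm c]

/-- The resonant forcings at order `k + 2` that can be cancelled by adding a resonant term at
order `k`. -/
noncomputable def correctable (hS : ContDiff ℝ (⊤ : ℕ∞) S) (g₂ g₃ : ℝ) (k : ℕ) :
    Submodule ℝ (ℝ → ℝ → ℝ) where
  carrier := {f | ∃ b ∈ trigSpan S (gradedIdx 1 k), ∃ d ∈ trigSpan S (gradedIdx 1 (k + 1)),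
    ∃ G ∈ trigSpan S (nonresIdx 1 (k + 2)), tauOp b = 0 ∧
      tauOp d = -(g₂ • (2 * trigMon S (1, 1) * b)) ∧ tauOp G = f + forcingShift S g₂ g₃ b d}
  add_mem' {f f'} hf hf' := by
    rw [Set.mem_ofPred_eq] at hf hf' ⊢
    obtain ⟨b, hb, d, hd, G, hG, h1, h2, h3⟩ := hf
    obtain ⟨b', hb', d', hd', G', hG', h1', h2', h3'⟩ := hf'
    have hs {Z} {f} (hf : f ∈ trigSpan S Z) : f ∈ smoothFun := trigSpan_le_smoothFun hS Z hf
    refine ⟨b + b', add_mem hb hb', d + d', add_mem hd hd', G + G', add_mem hG hG', ?_, ?_, ?_⟩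
    · rw [tauOp_add (hs hb) (hs hb'), h1, h1', add_zero]
    · rw [tauOp_add (hs hd) (hs hd'), h2, h2', mul_add, smul_add, neg_add]
    · rw [tauOp_add (hs hG) (hs hG'), h3, h3', forcingShift_add _ _ (hs hb) (hs hb')]
      abel
  zero_mem' := by
    rw [Set.mem_ofPred_eq]
    refine ⟨0, zero_mem _, 0, zero_mem _, 0, zero_mem _, tauOp_zero, ?_, ?_⟩
    · simp [tauOp_zero]
    · simp [tauOp_zero, forcingShift, lapOp_zero]
  smul_mem' c f hf := by
    rw [Set.mem_ofPred_eq] at hf ⊢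
    obtain ⟨b, hb, d, hd, G, hG, h1, h2, h3⟩ := hf
    refine ⟨c • b, Submodule.smul_mem _ _ hb, c • d, Submodule.smul_mem _ _ hd, c • G,
      Submodule.smul_mem _ _ hG, ?_, ?_, ?_⟩
    · rw [tauOp_smul, h1, smul_zero]
    · rw [tauOp_smul, h2, mul_smul_comm, smul_neg, smul_comm]
    · rw [tauOp_smul, h3, forcingShift_smul, smul_add]

variable {lam : ℝ} (hS2 : ∀ (n : ℕ) ξ, deriv (deriv fun x => S x ^ n) ξ =
  n ^ 2 * S ξ ^ n - lam * (n * (n + 1) / 2) * S ξ ^ (n + 2))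

include hS2 in
lemma forcingShift_trigMon {g₂ g₃ : ℝ} (hlam : lam = 5 / 6 * g₂ ^ 2 - 3 / 4 * g₃) (n : ℕ) :
    forcingShift S g₂ g₃ (trigMon S (n, 1))
      ((-g₂) • trigMon S (n + 1, 0) + (g₂ / 3) • trigMon S (n + 1, 2)) =
    ((n : ℝ) ^ 2 - 1) • trigMon S (n, 1) + (lam * (3 - n * (n + 1) / 2)) • trigMon S (n + 2, 1) +
      (-g₂ ^ 2 / 2 - 3 / 4 * g₃) • trigMon S (n + 2, 3) := by
  rw [forcingShift, lapOp_trigMon hS2, hlam]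
  ext τ ξ
  simp only [trigMon, secondTerm, Pi.add_apply, Pi.sub_apply, Pi.smul_apply, Pi.mul_apply,
    Pi.pow_apply, Pi.ofNat_apply, smul_eq_mul]
  push_cast
  simp only [one_mul, zero_mul, Real.cos_zero, Real.cos_two_mul, Real.cos_three_mul]
  ring

include hS2 in
lemma trigMon_mem_correctable (hS : ContDiff ℝ (⊤ : ℕ∞) S) {g₂ g₃ : ℝ}
    (hlam : lam = 5 / 6 * g₂ ^ 2 - 3 / 4 * g₃) (hpos : 0 < lam) {k : ℕ} (hk : k % 2 = 1)
    (n : ℕ) (hn : n % 2 = 1) (hnk : n ≤ k) :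
    trigMon S (n + 2, 1) ∈ correctable hS g₂ g₃ k := by
  induction n using Nat.strong_induction_on with
  | _ n ih =>
    have h1 : (-((n : ℝ) ^ 2 - 1)) • trigMon S (n, 1) +
        (-(lam * (3 - n * (n + 1) / 2))) • trigMon S (n + 2, 1) ∈ correctable hS g₂ g₃ k := by
      refine ⟨trigMon S (n, 1), trigMon_mem (by simp only [gradedIdx, Set.mem_ofPred_eq]; omega),
        (-g₂) • trigMon S (n + 1, 0) + (g₂ / 3) • trigMon S (n + 1, 2),
        add_mem (Submodule.smul_mem _ _ (trigMon_mem ?_))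
          (Submodule.smul_mem _ _ (trigMon_mem ?_)),
        ((-g₂ ^ 2 / 2 - 3 / 4 * g₃) / (-8)) • trigMon S (n + 2, 3),
        Submodule.smul_mem _ _ (trigMon_mem ?_), ?_, ?_, ?_⟩
      · simp only [gradedIdx, Set.mem_ofPred_eq]; omega
      · simp only [gradedIdx, Set.mem_ofPred_eq]; omega
      · simp only [nonresIdx, gradedIdx, Set.mem_ofPred_eq]; omega
      · simp [tauOp_trigMon]
      · have hs (q : ℕ) : trigMon S (n + 1, q) ∈ smoothFun :=
          trigSpan_le_smoothFun hS Set.univ (trigMon_mem (Set.mem_univ _))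
        rw [tauOp_add (Submodule.smul_mem _ _ (hs 0)) (Submodule.smul_mem _ _ (hs 2)), tauOp_smul,
          tauOp_smul, tauOp_trigMon, tauOp_trigMon, mul_assoc, trigMon_mul 1 1 n 1 le_rfl,
          add_comm 1 n]
        ext τ ξ
        simp
        ring
      · rw [tauOp_smul, tauOp_trigMon, forcingShift_trigMon hS2 hlam]
        ext τ ξ
        simp
        ring
    have h2 : ((n : ℝ) ^ 2 - 1) • trigMon S (n, 1) ∈ correctable hS g₂ g₃ k := by
      obtain rfl | hn3 : n = 1 ∨ 3 ≤ n := by omega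
      · simp
      · obtain ⟨l, rfl⟩ : ∃ l, n = l + 2 := ⟨n - 2, by omega⟩
        exact Submodule.smul_mem _ _ (ih l (by omega) (by omega) (by omega))
    have hc : -(lam * (3 - n * (n + 1) / 2)) ≠ 0 := by
      refine neg_ne_zero.2 (mul_ne_zero hpos.ne' fun h => ?_)
      have h6 : (n : ℝ) * (n + 1) = 6 := by linarith
      have h6' : n * (n + 1) = 6 := by exact_mod_cast h6
      have : n ≤ 2 := by nlinarith
      interval_cases n <;> omega
    have h3 := Submodule.smul_mem _ (-(lam * (3 - n * (n + 1) / 2)))⁻¹ (add_mem h1 h2)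
    convert h3 using 1
    rw [neg_smul, add_right_comm, neg_add_cancel, zero_add, smul_smul, inv_mul_cancel₀ hc,
      one_smul]

include hS2 in
lemma resIdx_le_correctable (hS : ContDiff ℝ (⊤ : ℕ∞) S) {g₂ g₃ : ℝ}
    (hlam : lam = 5 / 6 * g₂ ^ 2 - 3 / 4 * g₃) (hpos : 0 < lam) {k : ℕ} (hk : k % 2 = 1) :
    trigSpan S (resIdx 2 (k + 2)) ≤ correctable hS g₂ g₃ k := by
  rw [trigSpan, Submodule.span_le]
  rintro _ ⟨⟨n, q⟩, hp, rfl⟩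
  simp only [resIdx, gradedIdx, Set.mem_ofPred_eq] at hp
  obtain ⟨l, rfl⟩ : ∃ l, n = l + 2 := ⟨n - 2, by omega⟩
  rw [hp.2]
  exact trigMon_mem_correctable hS2 hS hlam hpos hk l (by omega) (by omega)

/-- The first `2 n + 2` terms of `w` solve the hierarchy, and the next order is solvable. -/
structure IsPartialSolution (S : ℝ → ℝ) (g : ℕ → ℝ) (n : ℕ) (w : ℕ → ℝ → ℝ → ℝ) : Prop where
  mem : ∀ k, w k ∈ trigSpan S (gradedIdx 1 k)
  zero : w 0 = 0
  one : w 1 = trigMon S (1, 1)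
  two : w 2 = secondTerm S (g 2)
  eqn : ∀ m, 1 ≤ m → m ≤ 2 * n + 2 → tauOp (w m) = forcing g w m
  solvable : ∃ p ∈ trigSpan S (nonresIdx 1 (2 * n + 3)), tauOp p = forcing g w (2 * n + 3)

lemma sum_convPow_mem (g : ℕ → ℝ) {w : ℕ → ℝ → ℝ → ℝ} (hw : ∀ k, w k ∈ trigSpan S (gradedIdx 1 k))
    (m : ℕ) : ∑ j ∈ Finset.Icc 2 m, g j • convPow w j m ∈ trigSpan S (gradedIdx 2 m) :=
  sum_mem fun j hj => Submodule.smul_mem _ _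
    (trigSpan_gradedIdx_anti (Finset.mem_Icc.1 hj).1 m (convPow_mem_gradedIdx hw j m))

include hS2 in
lemma IsPartialSolution.exists_extension (hS : ContDiff ℝ (⊤ : ℕ∞) S) {g : ℕ → ℝ}
    (hlam : lam = 5 / 6 * g 2 ^ 2 - 3 / 4 * g 3) (hpos : 0 < lam) {n : ℕ} {w : ℕ → ℝ → ℝ → ℝ}
    (hw : IsPartialSolution S g n w) :
    ∃ w', IsPartialSolution S g (n + 1) w' ∧ ∀ k ≤ 2 * n + 2, w' k = w k := by
  obtain ⟨p, hp, hpeq⟩ := hw.solvable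
  have hs {Z} {f} (hf : f ∈ trigSpan S Z) : f ∈ smoothFun := trigSpan_le_smoothFun hS Z hf
  obtain ⟨N, hN⟩ : ∃ N, N = 2 * n + 2 := ⟨_, rfl⟩
  have hN3 : 2 * n + 3 = N + 1 := by omega
  rw [hN3] at hp hpeq
  set w₁ := Function.update w (N + 1) p with hw₁
  have hmem₁ : ∀ k, w₁ k ∈ trigSpan S (gradedIdx 1 k) := by
    intro k
    by_cases hk : k = N + 1
    · subst hk
      simpa [hw₁] using trigSpan_mono (nonresIdx_subset _ _) hp
    · simpa [hw₁, hk] using hw.mem k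
  have hf₁ : forcing g w₁ (N + 2) ∈ trigSpan S (gradedIdx 1 (N + 2)) := by
    refine sub_mem (lapOp_mem hS hS2 ?_ ?_ (hmem₁ (N + 2 - 2)))
      (trigSpan_gradedIdx_anti (by norm_num) _ (sum_convPow_mem g hmem₁ _))
    · intro x hx
      simp only [gradedIdx, Set.mem_ofPred_eq] at hx ⊢
      omega
    · intro x hx
      simp only [gradedIdx, Set.mem_ofPred_eq] at hx ⊢
      omega
  rw [gradedIdx_eq_nonresIdx (by rw [hN, Nat.even_iff]; omega)] at hf₁
  obtain ⟨q, hq, hqeq⟩ := exists_tauOp_eq hS (fun _ h => h.2) hf₁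
  set w₂ := Function.update w₁ (N + 2) q with hw₂
  have hw₂p : w₂ (N + 1) = p := by simp [hw₂, hw₁]
  have hw₂q : w₂ (N + 2) = q := by simp [hw₂]
  have hw₂lt : ∀ k, k ≤ N → w₂ k = w k := by
    intro k hk
    simp [hw₂, hw₁, show k ≠ N + 1 by omega, show k ≠ N + 2 by omega]
  have hw₂0 : w₂ 0 = 0 := by rw [hw₂lt 0 (by omega), hw.zero]
  have hw₂1 : w₂ 1 = trigMon S (1, 1) := by rw [hw₂lt 1 (by omega), hw.one]
  have hw₂2 : w₂ 2 = secondTerm S (g 2) := by rw [hw₂lt 2 (by omega), hw.two]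
  have hmem₂ : ∀ k, w₂ k ∈ trigSpan S (gradedIdx 1 k) := by
    intro k
    by_cases hk : k = N + 2
    · rw [hk, hw₂q]
      exact trigSpan_mono (nonresIdx_subset _ _) hq
    · simpa [hw₂, hk] using hmem₁ k
  obtain ⟨r, hr, H, hH, hrH⟩ := exists_add_of_mem_gradedIdx (sum_convPow_mem g hmem₂ (N + 3))
  have hlap : lapOp p ∈ trigSpan S (nonresIdx 1 (N + 3)) := by
    refine lapOp_mem hS hS2 ?_ ?_ hp
    · intro x hx
      simp only [nonresIdx, gradedIdx, Set.mem_ofPred_eq] at hx ⊢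
      omega
    · intro x hx
      simp only [nonresIdx, gradedIdx, Set.mem_ofPred_eq] at hx ⊢
      omega
  have hH' : H ∈ trigSpan S (nonresIdx 1 (N + 3)) := by
    refine trigSpan_mono (fun x hx => ?_) hH
    simp only [nonresIdx, gradedIdx, Set.mem_ofPred_eq] at hx ⊢
    omega
  obtain ⟨G₀, hG₀, hG₀eq⟩ := exists_tauOp_eq hS (fun _ h => h.2) (sub_mem hlap hH')
  obtain ⟨b, hb, d, hd, G, hG, hbeq, hdeq, hGeq⟩ :=
    resIdx_le_correctable hS2 hS hlam hpos (k := N + 1) (by omega) (neg_mem hr)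
  have hbd : ∀ k ≤ N, (w₂ + Pi.single (N + 1) b + Pi.single (N + 2) d : ℕ → ℝ → ℝ → ℝ) k =
      w₂ k := by
    intro k hk
    simp [show k ≠ N + 1 by omega, show k ≠ N + 2 by omega]
  have hbd1 : (w₂ + Pi.single (N + 1) b + Pi.single (N + 2) d : ℕ → ℝ → ℝ → ℝ) (N + 1) =
      p + b := by
    simp [hw₂p]
  have hbd2 : (w₂ + Pi.single (N + 1) b + Pi.single (N + 2) d : ℕ → ℝ → ℝ → ℝ) (N + 2) =
      q + d := by
    simp [hw₂q]
  refine ⟨w₂ + Pi.single (N + 1) b + Pi.single (N + 2) d, ⟨?_, ?_, ?_, ?_, ?_, ?_⟩, ?_⟩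
  · intro k
    refine add_mem (add_mem (hmem₂ k) ?_) ?_
    · by_cases hk : k = N + 1
      · subst hk
        simpa using hb
      · simp [hk]
    · by_cases hk : k = N + 2
      · subst hk
        simpa using hd
      · simp [hk]
  · rw [hbd 0 (by omega), hw₂0]
  · rw [hbd 1 (by omega), hw₂1]
  · rw [hbd 2 (by omega), hw₂2]
  · intro m hm hm'
    obtain hm' | rfl | rfl : m ≤ N ∨ m = N + 1 ∨ m = N + 2 := by omega
    · rw [hbd m hm', hw₂lt m hm', hw.eqn m hm (by omega)]
      refine forcing_congr g hw.zero hm fun k hk => ?_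
      rw [hbd k (by omega), hw₂lt k (by omega)]
    · rw [hbd1, tauOp_add (hs hp) (hs hb), hbeq, hpeq, add_zero]
      refine forcing_congr g hw.zero (by omega) fun k hk => ?_
      rw [hbd k (by omega), hw₂lt k (by omega)]
    · rw [hbd2, tauOp_add (hs hq) (hs hd), hqeq, hdeq, forcing_perturb_succ g hw₂0 (by omega),
        hw₂1, sub_eq_add_neg]
      congr 1
      refine forcing_congr g ?_ (by omega) fun k hk => ?_
      · simp [hw₁, hw.zero]
      · simp [hw₂, hk.ne]
  · refine ⟨G₀ + G, ?_, ?_⟩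
    · rw [show 2 * (n + 1) + 3 = N + 3 by omega]
      exact add_mem hG₀ hG
    · rw [show 2 * (n + 1) + 3 = N + 3 by omega, tauOp_add (hs hG₀) (hs hG), hG₀eq, hGeq,
        forcing_perturb_succ_succ g hw₂0 (by omega) d (hs hb) (hs (hmem₂ _)), hw₂1, hw₂2,
        ← forcingShift, forcing, hrH, show N + 3 - 2 = N + 1 by omega, hw₂p]
      abel
  · intro k hk
    rw [hbd k (by omega), hw₂lt k (by omega)]

end Step

section Solution

variable {S : ℝ → ℝ} {lam : ℝ} (hS2 : ∀ (n : ℕ) ξ, deriv (deriv fun x => S x ^ n) ξ =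
  n ^ 2 * S ξ ^ n - lam * (n * (n + 1) / 2) * S ξ ^ (n + 2))

lemma secondTerm_mem (g₂ : ℝ) : secondTerm S g₂ ∈ trigSpan S (gradedIdx 1 2) :=
  add_mem (Submodule.smul_mem _ _ (trigMon_mem (by simp [gradedIdx])))
    (Submodule.smul_mem _ _ (trigMon_mem (by simp [gradedIdx])))

include hS2 in
lemma exists_isPartialSolution_zero (hS : ContDiff ℝ (⊤ : ℕ∞) S) {g : ℕ → ℝ}
    (hlam : lam = 5 / 6 * g 2 ^ 2 - 3 / 4 * g 3) : ∃ w, IsPartialSolution S g 0 w := by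
  have hs {Z} {f} (hf : f ∈ trigSpan S Z) : f ∈ smoothFun := trigSpan_le_smoothFun hS Z hf
  obtain ⟨w, h0, h1, h2, h3⟩ : ∃ w : ℕ → ℝ → ℝ → ℝ, w 0 = 0 ∧ w 1 = trigMon S (1, 1) ∧
      w 2 = secondTerm S (g 2) ∧ ∀ k, 3 ≤ k → w k = 0 :=
    ⟨fun k => if k = 1 then trigMon S (1, 1) else if k = 2 then secondTerm S (g 2) else 0,
      by simp, by simp, by simp, fun k hk => by
        simp [show k ≠ 1 by omega, show k ≠ 2 by omega]⟩
  refine ⟨w, ⟨fun k => ?_, h0, h1, h2, fun m hm hm' => ?_, ?_⟩⟩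
  · obtain rfl | rfl | rfl | hk : k = 0 ∨ k = 1 ∨ k = 2 ∨ 3 ≤ k := by omega
    · rw [h0]
      exact zero_mem _
    · rw [h1]
      exact trigMon_mem (by simp [gradedIdx])
    · rw [h2]
      exact secondTerm_mem _
    · rw [h3 k hk]
      exact zero_mem _
  · obtain rfl | rfl : m = 1 ∨ m = 2 := by omega
    · rw [h1, tauOp_trigMon, forcing, h0, lapOp_zero]
      simp
    · rw [forcing, h0, lapOp_zero, Finset.Icc_self, Finset.sum_singleton, convPow_self h0, h1, h2,
        secondTerm, tauOp_add, tauOp_smul, tauOp_smul, tauOp_trigMon, tauOp_trigMon,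
        pow_two (trigMon S (1, 1)), trigMon_mul 1 1 1 1 le_rfl]
      · ext τ ξ
        simp
        ring
      · exact Submodule.smul_mem _ _ (hs (trigMon_mem (Set.mem_univ _)))
      · exact Submodule.smul_mem _ _ (hs (trigMon_mem (Set.mem_univ _)))
  · refine ⟨((g 2 ^ 2 / 6 + g 3 / 4) / 8) • trigMon S (3, 3),
      Submodule.smul_mem _ _ (trigMon_mem (by simp [nonresIdx, gradedIdx])), ?_⟩
    have hI : Finset.Icc 2 (2 * 0 + 3) = {2, 3} := rfl
    rw [forcing, hI, Finset.sum_pair (by norm_num), mul_zero, zero_add, convPow_self h0,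
      convPow_two_three h0, h1, h2, tauOp_smul, tauOp_trigMon,
      lapOp_trigMon hS2, hlam]
    ext τ ξ
    simp only [trigMon, secondTerm, Pi.add_apply, Pi.sub_apply, Pi.smul_apply, Pi.mul_apply,
      Pi.pow_apply, Pi.ofNat_apply, smul_eq_mul]
    push_cast
    simp only [one_mul, zero_mul, Real.cos_zero, Real.cos_two_mul, Real.cos_three_mul]
    ring

include hS2 in
lemma exists_formal_solution (hS : ContDiff ℝ (⊤ : ℕ∞) S) {g : ℕ → ℝ}
    (hlam : lam = 5 / 6 * g 2 ^ 2 - 3 / 4 * g 3) (hpos : 0 < lam) :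
    ∃ v : ℕ → ℝ → ℝ → ℝ, v 0 = 0 ∧ v 1 = trigMon S (1, 1) ∧
      (∀ k, v k ∈ trigSpan S (gradedIdx 1 k)) ∧ ∀ m, 1 ≤ m → tauOp (v m) = forcing g v m := by
  obtain ⟨w₀, hw₀⟩ := exists_isPartialSolution_zero hS2 hS hlam
  choose ext hext using fun (n : ℕ) (w : {w // IsPartialSolution S g n w}) =>
    w.2.exists_extension hS2 hS hlam hpos
  let W : ∀ n, {w // IsPartialSolution S g n w} :=
    fun n => Nat.rec ⟨w₀, hw₀⟩ (fun n w => ⟨ext n w, (hext n w).1⟩) n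
  have hW : ∀ n, ∀ k ≤ 2 * n + 2, (W (n + 1)).1 k = (W n).1 k := fun n => (hext n (W n)).2
  have hW' : ∀ n d, ∀ k ≤ 2 * n + 2, (W (n + d)).1 k = (W n).1 k := by
    intro n d k hk
    induction d with
    | zero => rfl
    | succ d ih => rw [← add_assoc, hW (n + d) k (by omega), ih]
  have hWk : ∀ k m, k ≤ m → (W m).1 k = (W k).1 k := by
    intro k m hkm
    obtain ⟨d, rfl⟩ := Nat.exists_eq_add_of_le hkm
    exact hW' k d k (by omega)
  refine ⟨fun k => (W k).1 k, (W 0).2.zero, (W 1).2.one, fun k => (W k).2.mem k, fun m hm => ?_⟩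
  rw [(W m).2.eqn m hm (by omega)]
  exact forcing_congr g (W m).2.zero hm fun k hk => hWk k m hk.le

lemma exists_abs_le_mul_abs {M : ℝ} (hM : ∀ ξ, |S ξ| ≤ M) {k : ℕ} {f : ℝ → ℝ → ℝ}
    (hf : f ∈ trigSpan S (gradedIdx 1 k)) : ∃ C, 0 ≤ C ∧ ∀ τ ξ, |f τ ξ| ≤ C * |S ξ| := by
  have hM0 : 0 ≤ M := (abs_nonneg _).trans (hM 0)
  induction hf using trigSpan_induction with
  | mon p hp =>
    obtain ⟨n, hn⟩ : ∃ n, p.1 = n + 1 := ⟨p.1 - 1, by have := hp.1; omega⟩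
    refine ⟨M ^ n, by positivity, fun τ ξ => ?_⟩
    rw [trigMon, hn, abs_mul, abs_pow, pow_succ]
    calc |S ξ| ^ n * |S ξ| * |Real.cos (p.2 * τ)| ≤ |S ξ| ^ n * |S ξ| * 1 := by
          gcongr
          exact Real.abs_cos_le_one _
      _ ≤ M ^ n * |S ξ| := by
          rw [mul_one]
          gcongr
          exact hM ξ
  | zero => exact ⟨0, le_rfl, by simp⟩
  | add f _ g _ hf hg =>
    obtain ⟨C, hC, h⟩ := hf
    obtain ⟨C', hC', h'⟩ := hg
    refine ⟨C + C', by positivity, fun τ ξ => (abs_add_le _ _).trans ?_⟩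
    rw [add_mul]
    exact add_le_add (h τ ξ) (h' τ ξ)
  | smul c f _ hf =>
    obtain ⟨C, hC, h⟩ := hf
    refine ⟨|c| * C, by positivity, fun τ ξ => ?_⟩
    rw [Pi.smul_apply, Pi.smul_apply, smul_eq_mul, abs_mul, mul_assoc]
    exact mul_le_mul_of_nonneg_left (h τ ξ) (abs_nonneg c)

lemma exists_polynomial_coeffs {k : ℕ} {f : ℝ → ℝ → ℝ}
    (hf : f ∈ trigSpan S (gradedIdx 1 k)) : ∃ a : ℕ → Polynomial ℝ,
      (∀ q ≤ k, (Odd (k + q) → a q = 0) ∧ (a q).natDegree ≤ k ∧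
        (∀ n, (a q).coeff n ≠ 0 → n % 2 = k % 2) ∧ (a q).coeff 0 = 0) ∧
      (∀ τ ξ, f τ ξ = ∑ q ∈ Finset.range (k + 1), (a q).eval (S ξ) * Real.cos (q * τ)) := by
  induction hf using trigSpan_induction with
  | mon p hp =>
    simp only [gradedIdx, Set.mem_ofPred_eq] at hp
    refine ⟨Pi.single p.2 (Polynomial.X ^ p.1), fun q _ => ?_, fun τ ξ => ?_⟩
    · by_cases hq : q = p.2
      · subst hq
        simp only [Pi.single_eq_same]
        refine ⟨fun h => ?_, ?_, fun n hn => ?_, ?_⟩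
        · rw [Nat.odd_iff] at h
          omega
        · simpa using hp.2.1
        · rw [Polynomial.coeff_X_pow] at hn
          have : n = p.1 := by by_contra h; simp [h] at hn
          omega
        · rw [Polynomial.coeff_X_pow, if_neg (by omega)]
      · simp [hq]
    · rw [Finset.sum_eq_single_of_mem p.2 (by simp; omega)]
      · simp [trigMon]
      · intro q _ hq
        simp [hq]
  | zero => exact ⟨0, by simp, by simp⟩
  | add f _ g _ hf hg =>
    obtain ⟨a, ha, h⟩ := hf
    obtain ⟨a', ha', h'⟩ := hg
    refine ⟨a + a', fun q hq => ⟨fun ho => ?_, ?_, fun n hn => ?_, ?_⟩, fun τ ξ => ?_⟩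
    · simp [(ha q hq).1 ho, (ha' q hq).1 ho]
    · exact Polynomial.natDegree_add_le_of_degree_le (ha q hq).2.1 (ha' q hq).2.1
    · rw [Pi.add_apply, Polynomial.coeff_add] at hn
      by_cases h0 : (a q).coeff n = 0
      · rw [h0, zero_add] at hn
        exact (ha' q hq).2.2.1 n hn
      · exact (ha q hq).2.2.1 n h0
    · simp [(ha q hq).2.2.2, (ha' q hq).2.2.2]
    · simp [h, h', add_mul, Finset.sum_add_distrib]
  | smul c f _ hf =>
    obtain ⟨a, ha, h⟩ := hf
    refine ⟨c • a, fun q hq => ⟨fun ho => ?_, ?_, fun n hn => ?_, ?_⟩, fun τ ξ => ?_⟩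
    · simp [(ha q hq).1 ho]
    · exact (Polynomial.natDegree_smul_le _ _).trans (ha q hq).2.1
    · refine (ha q hq).2.2.1 n fun h0 => hn ?_
      simp [h0]
    · simp [(ha q hq).2.2.2]
    · simp [h, Finset.mul_sum, mul_assoc]

lemma tau_add_two_pi {Z : Set (ℕ × ℕ)} {f : ℝ → ℝ → ℝ} (hf : f ∈ trigSpan S Z) (τ ξ : ℝ) :
    f (τ + 2 * Real.pi) ξ = f τ ξ := by
  induction hf using trigSpan_induction with
  | mon p _ => simp only [trigMon, mul_add, Real.cos_add_nat_mul_two_pi]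
  | zero => rfl
  | add f _ g _ hf hg => simp [hf, hg]
  | smul c f _ hf => simp [hf]

lemma tau_neg {Z : Set (ℕ × ℕ)} {f : ℝ → ℝ → ℝ} (hf : f ∈ trigSpan S Z) (τ ξ : ℝ) :
    f (-τ) ξ = f τ ξ := by
  induction hf using trigSpan_induction with
  | mon p _ => simp [trigMon]
  | zero => rfl
  | add f _ g _ hf hg => simp [hf, hg]
  | smul c f _ hf => simp [hf]

lemma xi_neg (hS : ∀ ξ, S (-ξ) = S ξ) {Z : Set (ℕ × ℕ)} {f : ℝ → ℝ → ℝ}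
    (hf : f ∈ trigSpan S Z) (τ ξ : ℝ) : f τ (-ξ) = f τ ξ := by
  induction hf using trigSpan_induction with
  | mon p _ => simp [trigMon, hS]
  | zero => rfl
  | add f _ g _ hf hg => simp [hf, hg]
  | smul c f _ hf => simp [hf]

end Solution

lemma deriv_deriv_sech_pow {A lam : ℝ} (hA : lam * A ^ 2 = 2) (n : ℕ) (ξ : ℝ) :
    deriv (deriv fun x => (A / Real.cosh x) ^ n) ξ = n ^ 2 * (A / Real.cosh ξ) ^ n -
      lam * (n * (n + 1) / 2) * (A / Real.cosh ξ) ^ (n + 2) := by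
  have hc (x : ℝ) : Real.cosh x ≠ 0 := (Real.cosh_pos x).ne'
  have hS (x : ℝ) : HasDerivAt (fun x => (A / Real.cosh x) ^ n)
      (-n * ((A / Real.cosh x) ^ n * (Real.sinh x / Real.cosh x))) x := by
    have h := ((hasDerivAt_const x A).fun_div (Real.hasDerivAt_cosh x) (hc x)).fun_pow n
    refine h.congr_deriv ?_
    cases n with
    | zero => simp
    | succ n =>
      have h' : (0 * Real.cosh x - A * Real.sinh x) / Real.cosh x ^ 2 =
          -(A / Real.cosh x * (Real.sinh x / Real.cosh x)) := by
        ring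
      rw [Nat.add_sub_cancel, h']
      ring
  have hT : HasDerivAt (fun x => Real.sinh x / Real.cosh x) (1 / Real.cosh ξ ^ 2) ξ := by
    refine ((Real.hasDerivAt_sinh ξ).fun_div (Real.hasDerivAt_cosh ξ) (hc ξ)).congr_deriv ?_
    rw [← Real.cosh_sq_sub_sinh_sq ξ]
    ring
  rw [show (deriv fun x => (A / Real.cosh x) ^ n) = _ from funext fun x => (hS x).deriv]
  rw [(((hS ξ).fun_mul hT).const_mul (-(n : ℝ))).deriv]
  have h2 : lam * (A / Real.cosh ξ) ^ 2 = 2 * (1 / Real.cosh ξ ^ 2) := by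
    rw [div_pow, ← mul_div_assoc, hA]
    ring
  have h3 : (Real.sinh ξ / Real.cosh ξ) ^ 2 = 1 - 1 / Real.cosh ξ ^ 2 := by
    have := hc ξ
    field_simp
    linarith [Real.cosh_sq_sub_sinh_sq ξ]
  rw [pow_add]
  linear_combination (n : ℝ) ^ 2 * (A / Real.cosh ξ) ^ n * h3 +
    (n * (n + 1) / 2) * (A / Real.cosh ξ) ^ n * h2

lemma exists_div_cosh_lt (A : ℝ) {δ : ℝ} (hδ : 0 < δ) :
    ∃ B : ℝ, ∀ ξ, B ≤ |ξ| → A / Real.cosh ξ < δ := by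
  refine ⟨2 * |A| / δ, fun ξ hξ => ?_⟩
  rw [div_lt_iff₀ (Real.cosh_pos ξ)]
  have h1 : |ξ| + 1 ≤ 2 * Real.cosh ξ := by
    have := Real.add_one_le_exp |ξ|
    have h := Real.exp_pos (-|ξ|)
    rw [← Real.cosh_abs, Real.cosh_eq]
    linarith
  rw [div_le_iff₀ hδ] at hξ
  have := le_abs_self A
  nlinarith

/-- Theorem 1, existence of the first formal solution: Let
`g(u) = Σ_{m≥1} g_m u^m` be entire with real coefficients, `g₁ = 1`, and
`λ := (5/6)g₂² − (3/4)g₃ > 0`; set `S(ξ) = √(2/λ)/cosh ξ`. Then there is a sequence of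
smooth functions `v_k(τ,ξ)`, with `v₀ = 0`, such that `v₁ = S(ξ)cos τ`; each `v_k`
(`k ≥ 1`) is `2π`-periodic and even in `τ`, even in `ξ`, and tends to `0` uniformly in `τ`
as `|ξ| → ∞`; each `v_k` is of the form `Σ_{q=0}^k a_{kq}(S(ξ))·cos(qτ)` with real
polynomials `a_{kq}` vanishing for `k+q` odd, of degree `≤ k`, containing only monomials
of degree `≡ k (mod 2)`, and divisible by their variable; and for every `m ≥ 1` the
coefficient of `ε^m` in the scaled equation vanishes:
`∂²_τ v_m + v_m − Δ v_{m−2} + Σ_{j=2}^m g_j Σ_{k₁+⋯+k_j=m, kᵢ≥1} v_{k₁}⋯v_{k_j} = 0`. -/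
theorem first_formal_solution (g : ℕ → ℝ) (hg1 : g 1 = 1)
    (hent : ∀ u : ℝ, Summable fun m => g m * u ^ m)
    (lam : ℝ) (hlam : lam = 5 / 6 * g 2 ^ 2 - 3 / 4 * g 3) (hpos : 0 < lam)
    (S : ℝ → ℝ) (hS : ∀ ξ, S ξ = Real.sqrt (2 / lam) / Real.cosh ξ) :
    ∃ v : ℕ → ℝ → ℝ → ℝ,
      (∀ τ ξ, v 0 τ ξ = 0) ∧
      (∀ k, ContDiff ℝ (⊤ : ℕ∞) fun p : ℝ × ℝ => v k p.1 p.2) ∧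
      (∀ τ ξ, v 1 τ ξ = S ξ * Real.cos τ) ∧
      (∀ k, 1 ≤ k →
        (∀ τ ξ, v k (τ + 2 * Real.pi) ξ = v k τ ξ) ∧
        (∀ τ ξ, v k (-τ) ξ = v k τ ξ) ∧
        (∀ τ ξ, v k τ (-ξ) = v k τ ξ) ∧
        (∀ δ > 0, ∃ A : ℝ, ∀ τ ξ, A ≤ |ξ| → |v k τ ξ| < δ)) ∧
      (∀ k, 1 ≤ k → ∃ a : ℕ → Polynomial ℝ,
        (∀ q ≤ k, (Odd (k + q) → a q = 0) ∧ (a q).natDegree ≤ k ∧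
          (∀ n, (a q).coeff n ≠ 0 → n % 2 = k % 2) ∧ (a q).coeff 0 = 0) ∧
        (∀ τ ξ, v k τ ξ = ∑ q ∈ Finset.range (k + 1),
          (a q).eval (S ξ) * Real.cos (q * τ))) ∧
      (∀ m, 1 ≤ m → ∀ τ ξ,
        deriv (deriv fun τ' => v m τ' ξ) τ + v m τ ξ
          - (deriv (deriv fun τ' => v (m - 2) τ' ξ) τ
             + deriv (deriv fun ξ' => v (m - 2) τ ξ') ξ)
          + ∑ j ∈ Finset.Icc 2 m, g j *
              ∑ c ∈ (Finset.Nat.antidiagonalTuple j m).filter (fun c => ∀ i, c i ≠ 0),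
                ∏ i, v (c i) τ ξ = 0) := by
  have hc (x : ℝ) : Real.cosh x ≠ 0 := (Real.cosh_pos x).ne'
  obtain rfl : S = fun ξ => Real.sqrt (2 / lam) / Real.cosh ξ := funext hS
  have hA : lam * Real.sqrt (2 / lam) ^ 2 = 2 := by
    rw [Real.sq_sqrt (by positivity), mul_div_cancel₀ _ hpos.ne']
  have hsm : ContDiff ℝ (⊤ : ℕ∞) fun ξ => Real.sqrt (2 / lam) / Real.cosh ξ :=
    contDiff_const.div Real.contDiff_cosh hc
  have habs (ξ : ℝ) : |Real.sqrt (2 / lam) / Real.cosh ξ| = Real.sqrt (2 / lam) / Real.cosh ξ :=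
    abs_of_nonneg (div_nonneg (Real.sqrt_nonneg _) (Real.cosh_pos ξ).le)
  have hM (ξ : ℝ) : |Real.sqrt (2 / lam) / Real.cosh ξ| ≤ Real.sqrt (2 / lam) := by
    rw [habs]
    exact div_le_self (Real.sqrt_nonneg _) (Real.one_le_cosh ξ)
  obtain ⟨v, h0, h1, hmem, heq⟩ :=
    exists_formal_solution (deriv_deriv_sech_pow hA) hsm hlam hpos
  refine ⟨v, by simp [h0], fun k => trigSpan_le_smoothFun hsm _ (hmem k), ?_, ?_, ?_, ?_⟩
  · intro τ ξ
    simp [h1, trigMon]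
  · refine fun k _ => ⟨tau_add_two_pi (hmem k), tau_neg (hmem k),
      xi_neg (by simp) (hmem k), fun δ hδ => ?_⟩
    obtain ⟨C, hC, h⟩ := exists_abs_le_mul_abs hM (hmem k)
    obtain ⟨B, hB⟩ := exists_div_cosh_lt (C * Real.sqrt (2 / lam)) hδ
    refine ⟨B, fun τ ξ hξ => (h τ ξ).trans_lt ?_⟩
    rw [habs, ← mul_div_assoc]
    exact hB ξ hξ
  · exact fun k _ => exists_polynomial_coeffs (hmem k)
  · intro m hm τ ξ
    have h := congrFun (congrFun (heq m hm) τ) ξ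
    simp only [tauOp, forcing, lapOp, Pi.sub_apply, Finset.sum_apply, Pi.smul_apply, smul_eq_mul,
      convPow_eq_sum_filter h0, Finset.prod_apply] at h
    rw [h]
    ring
end

section
/- Let g(u) = u + Σ_{m≥2} g_m u^m be an entire function with real coefficients. Then there exists a sequence of functions u_l (l ≥ 1) of two real variables (τ, ε) such that: (a) u₁(τ,ε) = cos τ; (b) for each l there exist rational functions c_{l,q}(X) ∈ ℝ(X), 0 ≤ q ≤ l, with c_{l,q} = 0 whenever l + q is odd, such that u_l(τ,ε) = Σ_{q=0}^{l} c_{l,q}(ε)·cos(qτ) wherever the c_{l,q} are defined; and (c) for every l ≥ 1 and every real ε which is not a pole of any c_{l',q} with l' ≤ l, the identity (1−ε²)·∂²_τ u_l(τ,ε) + (1 − l²ε²)·u_l(τ,ε) + Σ_{j=2}^{l} g_j · Σ_{(l₁,…,l_j) ∈ (ℤ_{≥1})^j, l₁+⋯+l_j = l} u_{l₁}(τ,ε)·⋯·u_{l_j}(τ,ε) = 0 holds for all τ ∈ ℝ. -/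
open Polynomial in
/-- The polynomial `∑_{q ≤ n} y_q T_q`, which takes the value `∑_{q ≤ n} y_q cos (qτ)` at
`cos τ`. -/
noncomputable def chebyshevSum {A : Type*} [CommRing A] (y : ℕ → A) (n : ℕ) : A[X] :=
  ∑ q ∈ Finset.range (n + 1), C (y q) * Chebyshev.T A q

/-- The coefficient of `z ^ l` in `∑_{j ≥ 2} g_j (∑_{k ≥ 1} P_k z ^ k) ^ j`. -/
def compositionSum {A : Type*} [CommRing A] (g P : ℕ → A) (l : ℕ) : A :=
  ∑ j ∈ Finset.Icc 2 l, g j *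
    ∑ k ∈ (Finset.Nat.antidiagonalTuple j l).filter (fun k => ∀ i, k i ≠ 0), ∏ i, P (k i)

theorem lt_of_mem_antidiagonalTuple {j l : ℕ} (hj : 2 ≤ j) {k : Fin j → ℕ}
    (hk : k ∈ (Finset.Nat.antidiagonalTuple j l).filter (fun k => ∀ i, k i ≠ 0)) (i : Fin j) :
    k i < l := by
  rw [Finset.mem_filter, Finset.Nat.mem_antidiagonalTuple] at hk
  obtain ⟨hsum, hne⟩ := hk
  have : Nontrivial (Fin j) := Fin.nontrivial_iff_two_le.mpr hj
  obtain ⟨i', hi'⟩ := exists_ne i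
  rw [← hsum]
  exact Finset.single_lt_sum hi' (Finset.mem_univ _) (Finset.mem_univ _)
    (Nat.pos_of_ne_zero (hne i')) (fun _ _ _ => Nat.zero_le _)

theorem compositionSum_congr {A : Type*} [CommRing A] (g : ℕ → A) {P P' : ℕ → A} {l : ℕ}
    (h : ∀ m < l, P m = P' m) : compositionSum g P l = compositionSum g P' l := by
  refine Finset.sum_congr rfl fun j hj => ?_
  congr 1
  refine Finset.sum_congr rfl fun k hk => Finset.prod_congr rfl fun i _ => ?_
  exact h _ (lt_of_mem_antidiagonalTuple (Finset.mem_Icc.mp hj).1 hk i)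

theorem map_compositionSum {A B : Type*} [CommRing A] [CommRing B] (f : A →+* B)
    (g P : ℕ → A) (l : ℕ) :
    f (compositionSum g P l) = compositionSum (fun j => f (g j)) (fun m => f (P m)) l := by
  simp [compositionSum, map_sum, map_mul, map_prod]

theorem map_chebyshevSum {A B : Type*} [CommRing A] [CommRing B] (f : A →+* B)
    (y : ℕ → A) (n : ℕ) :
    (chebyshevSum y n).map f = chebyshevSum (fun q => f (y q)) n := by
  simp [chebyshevSum, Polynomial.map_sum]

theorem chebyshevSum_congr {A : Type*} [CommRing A] {y y' : ℕ → A} {n : ℕ}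
    (h : ∀ q ≤ n, y q = y' q) : chebyshevSum y n = chebyshevSum y' n :=
  Finset.sum_congr rfl fun q hq => by rw [h q (Finset.mem_range_succ_iff.mp hq)]

theorem eval_cos_chebyshevSum (y : ℕ → ℝ) (n : ℕ) (τ : ℝ) :
    (chebyshevSum y n).eval (Real.cos τ) =
      ∑ q ∈ Finset.range (n + 1), y q * Real.cos (q * τ) := by
  simp [chebyshevSum, Polynomial.eval_finsetSum]

/-- The span of the Chebyshev polynomials `T_q` with `q ≤ n` and `q ≡ n` modulo `2`. -/
noncomputable def chebyshevSpan (K : Type*) [Field K] (n : ℕ) : Submodule K (Polynomial K) :=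
  Submodule.span K {p | ∃ q ≤ n, Even (n + q) ∧ p = Polynomial.Chebyshev.T K q}

section chebyshevSpan

variable {K : Type*} [Field K]

theorem T_mem_chebyshevSpan {n q : ℕ} (hq : q ≤ n) (h : Even (n + q)) :
    Polynomial.Chebyshev.T K q ∈ chebyshevSpan K n :=
  Submodule.subset_span ⟨q, hq, h, rfl⟩

theorem chebyshevSum_mem_chebyshevSpan {y : ℕ → K} {n : ℕ} (hy : ∀ q, Odd (n + q) → y q = 0) :
    chebyshevSum y n ∈ chebyshevSpan K n := by
  refine Submodule.sum_mem _ fun q hq => ?_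
  rw [← Polynomial.smul_eq_C_mul]
  rcases Nat.even_or_odd (n + q) with h | h
  · exact Submodule.smul_mem _ _ (T_mem_chebyshevSpan (Finset.mem_range_succ_iff.mp hq) h)
  · simp [hy q h]

theorem exists_chebyshevSum_eq {n : ℕ} {p : Polynomial K} (hp : p ∈ chebyshevSpan K n) :
    ∃ y : ℕ → K, (∀ q, Odd (n + q) → y q = 0) ∧ p = chebyshevSum y n := by
  induction hp using Submodule.span_induction with
  | mem p hp =>
    obtain ⟨q, hq, he, rfl⟩ := hp
    refine ⟨Pi.single q 1, fun r hr => ?_, ?_⟩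
    · refine Pi.single_eq_of_ne ?_ _
      rintro rfl
      exact Nat.not_even_iff_odd.mpr hr he
    · rw [chebyshevSum, Finset.sum_eq_single_of_mem q (Finset.mem_range_succ_iff.mpr hq)]
      · simp
      · intro r _ hr
        simp [Pi.single_eq_of_ne hr]
  | zero => exact ⟨0, fun _ _ => rfl, by simp [chebyshevSum]⟩
  | add p p' _ _ h h' =>
    obtain ⟨y, hy, rfl⟩ := h
    obtain ⟨y', hy', rfl⟩ := h'
    refine ⟨y + y', fun q hq => by simp [hy q hq, hy' q hq], ?_⟩
    simp [chebyshevSum, add_mul, Finset.sum_add_distrib]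
  | smul a p _ h =>
    obtain ⟨y, hy, rfl⟩ := h
    refine ⟨a • y, fun q hq => by simp [hy q hq], ?_⟩
    simp [chebyshevSum, Finset.smul_sum, Polynomial.smul_eq_C_mul, mul_assoc]

theorem mul_mem_chebyshevSpan [NeZero (2 : K)] {m n : ℕ} {p p' : Polynomial K}
    (hp : p ∈ chebyshevSpan K m) (hp' : p' ∈ chebyshevSpan K n) :
    p * p' ∈ chebyshevSpan K (m + n) := by
  have hle : chebyshevSpan K m * chebyshevSpan K n ≤ chebyshevSpan K (m + n) := by
    rw [chebyshevSpan, chebyshevSpan, Submodule.span_mul_span, Submodule.span_le]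
    rintro _ ⟨_, ⟨a, ha, hma, rfl⟩, _, ⟨b, hb, hnb, rfl⟩, rfl⟩
    have key : Polynomial.Chebyshev.T K a * Polynomial.Chebyshev.T K b =
        (2 : K)⁻¹ • (Polynomial.Chebyshev.T K ((a + b : ℕ) : ℤ) +
          Polynomial.Chebyshev.T K (((a : ℤ) - b).natAbs : ℤ)) := by
      rw [Polynomial.Chebyshev.T_natAbs, Nat.cast_add, ← Polynomial.Chebyshev.T_mul_T, mul_assoc,
        ← Polynomial.C_ofNat, ← Polynomial.smul_eq_C_mul, smul_smul,
        inv_mul_cancel₀ (NeZero.ne (2 : K)), one_smul]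
    simp only [SetLike.mem_coe]
    rw [key]
    refine Submodule.smul_mem _ _ (Submodule.add_mem _ ?_ ?_)
    · exact T_mem_chebyshevSpan (by lia) (by grind)
    · exact T_mem_chebyshevSpan (by lia) (by grind)
  exact hle (Submodule.mul_mem_mul hp hp')

theorem prod_mem_chebyshevSpan [NeZero (2 : K)] {ι : Type*} (s : Finset ι) (k : ι → ℕ)
    (P : ι → Polynomial K) (h : ∀ i ∈ s, P i ∈ chebyshevSpan K (k i)) :
    ∏ i ∈ s, P i ∈ chebyshevSpan K (∑ i ∈ s, k i) := by
  induction s using Finset.cons_induction with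
  | empty => simpa using T_mem_chebyshevSpan (K := K) (n := 0) (q := 0) le_rfl (by simp)
  | cons a s ha ih =>
    rw [Finset.prod_cons, Finset.sum_cons]
    exact mul_mem_chebyshevSpan (h a (by simp)) (ih fun i hi => h i (by simp [hi]))

theorem compositionSum_mem_chebyshevSpan [NeZero (2 : K)] (g : ℕ → K) {P : ℕ → Polynomial K}
    {l : ℕ} (h : ∀ m < l, P m ∈ chebyshevSpan K m) :
    compositionSum (fun j => Polynomial.C (g j)) P l ∈ chebyshevSpan K l := by
  refine Submodule.sum_mem _ fun j hj => ?_
  rw [← Polynomial.smul_eq_C_mul]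
  refine Submodule.smul_mem _ _ (Submodule.sum_mem _ fun k hk => ?_)
  have hlt := lt_of_mem_antidiagonalTuple (Finset.mem_Icc.mp hj).1 hk
  rw [Finset.mem_filter, Finset.Nat.mem_antidiagonalTuple] at hk
  rw [← hk.1]
  exact prod_mem_chebyshevSpan _ _ _ fun i _ => h _ (hlt i)

end chebyshevSpan

theorem exists_seq_of_forall_exists_step {α : Type*} [Inhabited α] (Step : ℕ → (ℕ → α) → α → Prop)
    (hloc : ∀ l c c' y, (∀ m < l, c m = c' m) → Step l c y → Step l c' y)
    (hex : ∀ l c, (∀ m < l, Step m c (c m)) → ∃ y, Step l c y) :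
    ∃ c : ℕ → α, ∀ l, Step l c (c l) := by
  classical
  let F : (l : ℕ) → ((m : ℕ) → m < l → α) → α := fun l prev =>
    Classical.epsilon (Step l fun m => if h : m < l then prev m h else default)
  let c : ℕ → α := Nat.lt_wfRel.wf.fix F
  have hc (l : ℕ) : c l = Classical.epsilon (Step l fun m => if m < l then c m else default) := by
    have h := Nat.lt_wfRel.wf.fix_eq F l
    simpa [F, c] using h
  refine ⟨c, fun l => ?_⟩
  induction l using Nat.strong_induction_on with
  | _ l ih =>
    have hagree : ∀ m < l, c m = if m < l then c m else default := fun m hm => by simp [hm]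
    obtain ⟨y, hy⟩ := hex l c ih
    have h := Classical.epsilon_spec ⟨y, hloc l _ _ y hagree hy⟩
    rw [← hc] at h
    exact hloc l _ _ _ (fun m hm => (hagree m hm).symm) h

open Polynomial in
/-- The polynomial `1 - q² - ε²(l² - q²)` in `ε`: the factor by which
`(1 - ε²)∂²_τ + (1 - l²ε²)` multiplies `cos (qτ)`. -/
noncomputable def modeSymbol (l q : ℕ) : ℝ[X] :=
  C (1 - (q : ℝ) ^ 2) - C ((l : ℝ) ^ 2 - (q : ℝ) ^ 2) * X ^ 2

theorem eval_modeSymbol (l q : ℕ) (ε : ℝ) :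
    (modeSymbol l q).eval ε = 1 - (q : ℝ) ^ 2 - ((l : ℝ) ^ 2 - (q : ℝ) ^ 2) * ε ^ 2 := by
  simp [modeSymbol]

theorem modeSymbol_ne_zero {l : ℕ} (hl : l ≠ 1) (q : ℕ) : modeSymbol l q ≠ 0 := by
  intro h
  have h1 := eval_modeSymbol l q 1
  rw [h, Polynomial.eval_zero] at h1
  have h2 : (l : ℝ) ^ 2 = 1 := by linarith
  exact hl (by exact_mod_cast (pow_eq_one_iff_of_nonneg (Nat.cast_nonneg l) two_ne_zero).mp h2)

theorem modeSymbol_one_one : modeSymbol 1 1 = 0 := by simp [modeSymbol]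

theorem exists_formal_coefficients (g : ℕ → ℝ) :
    ∃ c : ℕ → ℕ → RatFunc ℝ, c 1 = Pi.single 1 1 ∧ (∀ l q, Odd (l + q) → c l q = 0) ∧
      ∀ l, chebyshevSum (fun q => algebraMap _ (RatFunc ℝ) (modeSymbol l q) * c l q) l +
        compositionSum (fun j => Polynomial.C (RatFunc.C (g j)))
          (fun m => chebyshevSum (c m) m) l = 0 := by
  let Step (l : ℕ) (c : ℕ → ℕ → RatFunc ℝ) (y : ℕ → RatFunc ℝ) : Prop :=
    (l = 1 → y = Pi.single 1 1) ∧ (∀ q, Odd (l + q) → y q = 0) ∧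
      chebyshevSum (fun q => algebraMap _ (RatFunc ℝ) (modeSymbol l q) * y q) l +
        compositionSum (fun j => Polynomial.C (RatFunc.C (g j)))
          (fun m => chebyshevSum (c m) m) l = 0
  suffices h : ∃ c : ℕ → ℕ → RatFunc ℝ, ∀ l, Step l c (c l) by
    obtain ⟨c, hc⟩ := h
    exact ⟨c, (hc 1).1 rfl, fun l => (hc l).2.1, fun l => (hc l).2.2⟩
  refine exists_seq_of_forall_exists_step Step ?_ ?_
  · rintro l c c' y h ⟨h1, h2, h3⟩
    refine ⟨h1, h2, ?_⟩
    rw [← h3]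
    congr 1
    exact compositionSum_congr _ fun m hm => by rw [h m hm]
  · intro l c h
    by_cases hl : l = 1
    · subst hl
      refine ⟨Pi.single 1 1, fun _ => rfl, fun q hq => ?_, ?_⟩
      · refine Pi.single_eq_of_ne ?_ _
        rintro rfl
        exact absurd hq (by decide)
      · simp [chebyshevSum, compositionSum, Finset.sum_range_succ, modeSymbol_one_one]
    · obtain ⟨b, hb, hsum⟩ := exists_chebyshevSum_eq
        (compositionSum_mem_chebyshevSpan (fun j => RatFunc.C (g j)) (l := l)
          fun m hm => chebyshevSum_mem_chebyshevSpan (h m hm).2.1)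
      refine ⟨fun q => -b q / algebraMap _ (RatFunc ℝ) (modeSymbol l q), fun h => absurd h hl,
        fun q hq => by simp [hb q hq], ?_⟩
      rw [hsum]
      have hD (q : ℕ) : algebraMap _ (RatFunc ℝ) (modeSymbol l q) ≠ 0 := by
        simpa using modeSymbol_ne_zero hl q
      simp_rw [mul_div_cancel₀ _ (hD _)]
      simp [chebyshevSum]

/-- The ring of rational functions without a pole at `ε`. -/
def regularAt (ε : ℝ) : Subring (RatFunc ℝ) where
  carrier := {f | f.denom.eval ε ≠ 0}
  one_mem' := by simp
  zero_mem' := by simp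
  mul_mem' {x y} hx hy h := by
    have := Polynomial.eval_eq_zero_of_dvd_of_eval_eq_zero (RatFunc.denom_mul_dvd x y) h
    rw [Polynomial.eval_mul] at this
    exact mul_ne_zero hx hy this
  add_mem' {x y} hx hy h := by
    have := Polynomial.eval_eq_zero_of_dvd_of_eval_eq_zero (RatFunc.denom_add_dvd x y) h
    rw [Polynomial.eval_mul] at this
    exact mul_ne_zero hx hy this
  neg_mem' {x} hx h := by
    have hdvd := RatFunc.denom_mul_dvd (RatFunc.C (-1)) x
    rw [RatFunc.denom_C, one_mul, map_neg, map_one, neg_one_mul] at hdvd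
    exact hx (Polynomial.eval_eq_zero_of_dvd_of_eval_eq_zero hdvd h)

/-- Evaluation at `ε` of the rational functions without a pole there. -/
noncomputable def regularAtEval (ε : ℝ) : regularAt ε →+* ℝ where
  toFun f := RatFunc.eval (RingHom.id ℝ) ε f
  map_one' := by simp
  map_zero' := by simp
  map_mul' x y := RatFunc.eval_mul _ _ x.2 y.2
  map_add' x y := RatFunc.eval_add _ _ x.2 y.2

theorem algebraMap_mem_regularAt (ε : ℝ) (p : Polynomial ℝ) :
    algebraMap _ (RatFunc ℝ) p ∈ regularAt ε := by
  change (RatFunc.denom _).eval ε ≠ 0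
  simp

theorem eval_formal_identity {g : ℕ → ℝ} {c : ℕ → ℕ → RatFunc ℝ} {l : ℕ}
    (hc : chebyshevSum (fun q => algebraMap _ (RatFunc ℝ) (modeSymbol l q) * c l q) l +
      compositionSum (fun j => Polynomial.C (RatFunc.C (g j)))
        (fun m => chebyshevSum (c m) m) l = 0)
    {ε : ℝ} (hε : ∀ m ≤ l, ∀ q ≤ m, (c m q).denom.eval ε ≠ 0) (τ : ℝ) :
    ∑ q ∈ Finset.range (l + 1), (modeSymbol l q).eval ε *
        RatFunc.eval (RingHom.id ℝ) ε (c l q) * Real.cos (q * τ) +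
      compositionSum g (fun m => ∑ q ∈ Finset.range (m + 1),
        RatFunc.eval (RingHom.id ℝ) ε (c m q) * Real.cos (q * τ)) l = 0 := by
  classical
  let d : ℕ → ℕ → regularAt ε := fun m q =>
    if h : c m q ∈ regularAt ε then ⟨c m q, h⟩ else 0
  have hd {m q : ℕ} (hm : m ≤ l) (hq : q ≤ m) : (d m q : RatFunc ℝ) = c m q := by
    have h : c m q ∈ regularAt ε := hε m hm q hq
    simp [d, h]
  let D : ℕ → regularAt ε := fun q => ⟨_, algebraMap_mem_regularAt ε (modeSymbol l q)⟩
  let G : ℕ → regularAt ε := fun j => ⟨_, algebraMap_mem_regularAt ε (Polynomial.C (g j))⟩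
  have hdc {m : ℕ} (hm : m ≤ l) :
      chebyshevSum (fun q => (d m q : RatFunc ℝ)) m = chebyshevSum (c m) m :=
    chebyshevSum_congr fun q hq => hd hm hq
  have key : chebyshevSum (fun q => D q * d l q) l +
      compositionSum (fun j => Polynomial.C (G j)) (fun m => chebyshevSum (d m) m) l = 0 := by
    refine Polynomial.map_injective (regularAt ε).subtype Subtype.val_injective ?_
    rw [Polynomial.map_zero, Polynomial.map_add, map_chebyshevSum, ← Polynomial.coe_mapRingHom,
      map_compositionSum, ← hc]
    congr 1
    · exact chebyshevSum_congr fun q hq => by simp [D, hd le_rfl hq]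
    · simp only [Polynomial.coe_mapRingHom, map_chebyshevSum, Polynomial.map_C, Subring.subtype_apply,
        G, RatFunc.algebraMap_C]
      exact compositionSum_congr _ fun m hm => hdc hm.le
  have hed {m q : ℕ} (hm : m ≤ l) (hq : q ≤ m) :
      regularAtEval ε (d m q) = RatFunc.eval (RingHom.id ℝ) ε (c m q) := by
    rw [← hd hm hq]; rfl
  have hD (q : ℕ) : regularAtEval ε (D q) = (modeSymbol l q).eval ε := by
    simp [regularAtEval, D]
  have hG (j : ℕ) : regularAtEval ε (G j) = g j := by
    simp [regularAtEval, G]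
  have h := congrArg
    ((Polynomial.evalRingHom (Real.cos τ)).comp (Polynomial.mapRingHom (regularAtEval ε))) key
  rw [map_zero, map_add, map_compositionSum] at h
  simp only [RingHom.comp_apply, Polynomial.coe_mapRingHom, Polynomial.coe_evalRingHom,
    map_chebyshevSum, Polynomial.map_C, Polynomial.eval_C, eval_cos_chebyshevSum, map_mul, hD,
    hG] at h
  rw [← h]
  congr 1
  · exact Finset.sum_congr rfl fun q hq => by rw [hed le_rfl (Finset.mem_range_succ_iff.mp hq)]
  · refine compositionSum_congr _ fun m hm => Finset.sum_congr rfl fun q hq => ?_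
    rw [hed hm.le (Finset.mem_range_succ_iff.mp hq)]

theorem deriv_deriv_cos_sum (s : Finset ℕ) (a : ℕ → ℝ) (τ : ℝ) :
    deriv (deriv fun t => ∑ q ∈ s, a q * Real.cos (q * t)) τ =
      ∑ q ∈ s, -(q : ℝ) ^ 2 * (a q * Real.cos (q * τ)) := by
  have h1 : (deriv fun t => ∑ q ∈ s, a q * Real.cos (q * t)) =
      fun t => ∑ q ∈ s, a q * (-Real.sin (q * t) * q) := by
    funext t
    refine (HasDerivAt.fun_sum fun q _ => ?_).deriv
    exact (((hasDerivAt_id t).const_mul (q : ℝ)).cos.const_mul (a q)).congr_deriv (by simp)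
  rw [h1]
  refine (HasDerivAt.fun_sum fun q _ => ?_).deriv
  exact ((((hasDerivAt_id τ).const_mul (q : ℝ)).sin.neg.mul_const (q : ℝ)).const_mul
    (a q)).congr_deriv (by simp; ring)

/-- Theorem 2, second formal solution: Let `g(u) = u + Σ_{m≥2} g_m u^m` be
entire with real coefficients. Then there exist functions `u_l(τ,ε)` such that
`u₁ = cos τ`; each `u_l` is of the form `Σ_{q=0}^l c_{l,q}(ε)·cos(qτ)` with rational
functions `c_{l,q} ∈ ℝ(X)` vanishing when `l + q` is odd, wherever the `c_{l,q}` are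
defined; and for every `l ≥ 1` and every real `ε` that is not a pole of any `c_{l',q}`
with `l' ≤ l`, the coefficient of `e^{−lξ}` in the scaled equation vanishes:
`(1−ε²)∂²_τ u_l + (1 − l²ε²)u_l + Σ_{j=2}^l g_j Σ_{l₁+⋯+l_j=l, lᵢ≥1} u_{l₁}⋯u_{l_j} = 0`. -/
theorem second_formal_solution (g : ℕ → ℝ) (hg1 : g 1 = 1)
    (hent : ∀ u : ℝ, Summable fun m => g m * u ^ m) :
    ∃ (u : ℕ → ℝ → ℝ → ℝ) (c : ℕ → ℕ → RatFunc ℝ),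
      (∀ τ ε, u 1 τ ε = Real.cos τ) ∧
      (∀ l, 1 ≤ l → ∀ q ≤ l, Odd (l + q) → c l q = 0) ∧
      (∀ l, 1 ≤ l → ∀ τ ε : ℝ, (∀ q ≤ l, Polynomial.eval ε (c l q).denom ≠ 0) →
        u l τ ε = ∑ q ∈ Finset.range (l + 1),
          RatFunc.eval (RingHom.id ℝ) ε (c l q) * Real.cos (q * τ)) ∧
      (∀ l, 1 ≤ l → ∀ ε : ℝ,
        (∀ l' ≤ l, ∀ q ≤ l', Polynomial.eval ε (c l' q).denom ≠ 0) →
        ∀ τ, (1 - ε ^ 2) * deriv (deriv fun τ' => u l τ' ε) τ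
            + (1 - (l : ℝ) ^ 2 * ε ^ 2) * u l τ ε
            + ∑ j ∈ Finset.Icc 2 l, g j *
                ∑ k ∈ (Finset.Nat.antidiagonalTuple j l).filter (fun k => ∀ i, k i ≠ 0),
                  ∏ i, u (k i) τ ε = 0) := by
  obtain ⟨c, hc1, hodd, hc⟩ := exists_formal_coefficients g
  refine ⟨fun l τ ε => ∑ q ∈ Finset.range (l + 1),
    RatFunc.eval (RingHom.id ℝ) ε (c l q) * Real.cos (q * τ), c, fun τ ε => ?_,
    fun l _ q _ => hodd l q, fun _ _ _ _ _ => rfl, fun l _ ε hε τ => ?_⟩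
  · simp [hc1, Finset.sum_range_succ]
  · rw [← eval_formal_identity (hc l) hε τ]
    simp only [compositionSum]
    congr 1
    rw [deriv_deriv_cos_sum, Finset.mul_sum, Finset.mul_sum, ← Finset.sum_add_distrib]
    refine Finset.sum_congr rfl fun q _ => ?_
    rw [eval_modeSymbol]
    ring
end

section
/- Let g(u) = Σ_{m odd, m≥1} g_m u^m be an odd entire function with real coefficients, g₁ = 1, and suppose there exists α > 0 such that |g_m| ≤ α^{m−1}/m! for every odd m. Then for every ε ∈ (0,1) there exist ξ₀ ∈ ℝ and real coefficients a_{l,s}, indexed by odd integers l, s with 1 ≤ s ≤ l, with a_{1,1} = ε, such that: (a) Σ_{l,s} |a_{l,s}|·e^{−lξ} < ∞ for every ξ > ξ₀; and (b) the function u(x,t) := Σ_{l,s odd, s≤l} a_{l,s}·e^{−l·εx}·cos(s·√(1−ε²)·t), defined on the region {(x,t) : εx > ξ₀}, satisfies ∂²_t u − ∂²_x u + g(u) = 0 at every point of that region. In particular u is periodic in t with period 2π/√(1−ε²), tends to 0 as x → +∞, and is not identically zero. -/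
namespace FormalSolution

open Finset MvPowerSeries
open scoped ENNReal

variable {σ : Type*}

/-- Coefficients of the composition `∑ m, h m * f ^ m`, for `f` without constant term. -/
noncomputable def compCoeff (h : ℕ → ℝ) (f : MvPowerSeries σ ℝ) (n : σ →₀ ℕ) : ℝ :=
  ∑ m ∈ range (n.degree + 1), h m * coeff n (f ^ m)

/-- The weighted `ℓ¹` norm of the coefficients, with values in `[0, ∞]`. -/
noncomputable def wnorm (r : ℝ≥0∞) (f : MvPowerSeries σ ℝ) : ℝ≥0∞ :=
  ∑' n : σ →₀ ℕ, ‖coeff n f‖ₑ * r ^ n.degree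

theorem coeff_pow_eq_zero_of_degree_lt {f : MvPowerSeries σ ℝ} (hf : coeff 0 f = 0) (m : ℕ) :
    ∀ n : σ →₀ ℕ, n.degree < m → coeff n (f ^ m) = 0 := by
  classical
  induction m with
  | zero => intro n hn; omega
  | succ m ih =>
    intro n hn
    rw [pow_succ, coeff_mul]
    refine sum_eq_zero fun p hp => ?_
    rw [HasAntidiagonal.mem_antidiagonal] at hp
    have hd : p.1.degree + p.2.degree = n.degree := by rw [← hp, map_add]
    by_cases h2 : p.2.degree = 0
    · rw [(Finsupp.degree_eq_zero_iff _).1 h2, hf, mul_zero]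
    · rw [ih p.1 (by omega), zero_mul]

theorem coeff_pow_eq_zero_of_parity {f : MvPowerSeries σ ℝ}
    (hf : ∀ n, ¬ Odd n.degree → coeff n f = 0) (m : ℕ) :
    ∀ n : σ →₀ ℕ, Odd (n.degree + m) → coeff n (f ^ m) = 0 := by
  classical
  induction m with
  | zero =>
    intro n hn
    rw [pow_zero, coeff_one, if_neg]
    rintro rfl
    simp at hn
  | succ m ih =>
    intro n hn
    rw [pow_succ, coeff_mul]
    refine sum_eq_zero fun p hp => ?_
    rw [HasAntidiagonal.mem_antidiagonal] at hp
    have hd : p.1.degree + p.2.degree = n.degree := by rw [← hp, map_add]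
    by_cases h2 : Odd p.2.degree
    · rw [ih p.1, zero_mul]
      rw [← hd] at hn
      grind
    · rw [hf _ h2, mul_zero]

theorem coeff_pow_congr {f g : MvPowerSeries σ ℝ} (hf : coeff 0 f = 0) (hg : coeff 0 g = 0)
    {d : ℕ} (hfg : ∀ n : σ →₀ ℕ, n.degree < d → coeff n f = coeff n g) (m : ℕ) :
    ∀ n : σ →₀ ℕ, n.degree < d + m → coeff n (f ^ (m + 1)) = coeff n (g ^ (m + 1)) := by
  classical
  induction m with
  | zero => simpa using hfg
  | succ m ih =>
    intro n hn
    rw [pow_succ f, pow_succ g, coeff_mul, coeff_mul]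
    refine sum_congr rfl fun p hp => ?_
    rw [HasAntidiagonal.mem_antidiagonal] at hp
    have hd : p.1.degree + p.2.degree = n.degree := by rw [← hp, map_add]
    by_cases h2 : p.2.degree = 0
    · rw [(Finsupp.degree_eq_zero_iff _).1 h2, hf, hg, mul_zero, mul_zero]
    by_cases h1 : p.1.degree < m + 1
    · rw [coeff_pow_eq_zero_of_degree_lt hf _ _ h1, coeff_pow_eq_zero_of_degree_lt hg _ _ h1,
        zero_mul, zero_mul]
    · rw [ih p.1 (by omega), hfg p.2 (by omega)]

theorem coeff_pow_symm {f : MvPowerSeries σ ℝ} (e : (σ →₀ ℕ) ≃+ (σ →₀ ℕ))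
    (hf : ∀ n, coeff (e n) f = coeff n f) (m : ℕ) :
    ∀ n, coeff (e n) (f ^ m) = coeff n (f ^ m) := by
  classical
  induction m with
  | zero => intro n; simp [coeff_one]
  | succ m ih =>
    intro n
    rw [pow_succ, coeff_mul, coeff_mul]
    symm
    refine sum_equiv (e.toEquiv.prodCongr e.toEquiv) (fun p => ?_) (fun p _ => ?_)
    · simp [HasAntidiagonal.mem_antidiagonal, ← map_add]
    · simp [ih, hf]

theorem wnorm_mul_le (r : ℝ≥0∞) (f g : MvPowerSeries σ ℝ) :
    wnorm r (f * g) ≤ wnorm r f * wnorm r g := by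
  classical
  calc wnorm r (f * g)
      ≤ ∑' n : σ →₀ ℕ, ∑ p ∈ antidiagonal n,
          (‖coeff p.1 f‖ₑ * r ^ p.1.degree) * (‖coeff p.2 g‖ₑ * r ^ p.2.degree) := by
        refine ENNReal.tsum_le_tsum fun n => ?_
        rw [coeff_mul]
        refine (mul_le_mul_left (enorm_sum_le _ _) _).trans ?_
        rw [sum_mul]
        refine sum_le_sum fun p hp => ?_
        rw [HasAntidiagonal.mem_antidiagonal] at hp
        rw [← hp, map_add, pow_add, enorm_mul]
        exact le_of_eq (by ring)
    _ = ∑' p : (σ →₀ ℕ) × (σ →₀ ℕ),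
          (‖coeff p.1 f‖ₑ * r ^ p.1.degree) * (‖coeff p.2 g‖ₑ * r ^ p.2.degree) := by
        rw [← HasAntidiagonal.sigmaAntidiagonalEquivProd.tsum_eq, ENNReal.tsum_sigma']
        refine tsum_congr fun n => ?_
        rw [tsum_fintype, ← sum_coe_sort]
        rfl
    _ = wnorm r f * wnorm r g := by
        rw [wnorm, wnorm, ← ENNReal.tsum_mul_right]
        refine (ENNReal.tsum_prod (f := fun i j : σ →₀ ℕ =>
          (‖coeff i f‖ₑ * r ^ i.degree) * (‖coeff j g‖ₑ * r ^ j.degree))).trans ?_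
        exact tsum_congr fun n => ENNReal.tsum_mul_left

theorem wnorm_pow_le (r : ℝ≥0∞) (f : MvPowerSeries σ ℝ) (m : ℕ) :
    wnorm r (f ^ m) ≤ wnorm r f ^ m := by
  classical
  induction m with
  | zero =>
    rw [pow_zero, pow_zero, wnorm, tsum_eq_single 0]
    · simp
    · intro n hn
      simp [coeff_one, hn]
  | succ m ih =>
    rw [pow_succ, pow_succ]
    exact (wnorm_mul_le _ _ _).trans (mul_le_mul_left ih _)

theorem tsum_enorm_compCoeff_le (h : ℕ → ℝ) (r M : ℝ≥0∞) (f : MvPowerSeries σ ℝ)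
    (hf : wnorm r f ≤ M) :
    ∑' n, ‖compCoeff h f n‖ₑ * r ^ n.degree ≤ ∑' m, ‖h m‖ₑ * M ^ m := by
  calc ∑' n, ‖compCoeff h f n‖ₑ * r ^ n.degree
      ≤ ∑' n : σ →₀ ℕ, ∑' m : ℕ, ‖h m‖ₑ * (‖coeff n (f ^ m)‖ₑ * r ^ n.degree) := by
        refine ENNReal.tsum_le_tsum fun n => ?_
        refine le_trans ?_ (ENNReal.sum_le_tsum (range (n.degree + 1)))
        refine (mul_le_mul_left (enorm_sum_le _ _) _).trans ?_
        rw [sum_mul]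
        refine sum_le_sum fun m _ => ?_
        rw [enorm_mul, mul_assoc]
    _ = ∑' m : ℕ, ‖h m‖ₑ * wnorm r (f ^ m) := by
        rw [ENNReal.tsum_comm]
        exact tsum_congr fun m => ENNReal.tsum_mul_left
    _ ≤ ∑' m, ‖h m‖ₑ * M ^ m := by
        refine ENNReal.tsum_le_tsum fun m => mul_le_mul_right ?_ _
        exact (wnorm_pow_le _ _ _).trans (pow_le_pow_left' hf m)

/-- Picard iterates of `f ↦ β + E · h(f)`, with `E` acting diagonally on coefficients. -/
noncomputable def iterate (β E : (σ →₀ ℕ) → ℝ) (h : ℕ → ℝ) : ℕ → MvPowerSeries σ ℝ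
  | 0 => 0
  | N + 1 => fun n => β n + E n * compCoeff h (iterate β E h N) n

theorem coeff_iterate_succ (β E : (σ →₀ ℕ) → ℝ) (h : ℕ → ℝ) (N : ℕ) (n : σ →₀ ℕ) :
    coeff n (iterate β E h (N + 1)) = β n + E n * compCoeff h (iterate β E h N) n := rfl

theorem compCoeff_congr {h : ℕ → ℝ} (h0 : h 0 = 0) (h1 : h 1 = 0) {f g : MvPowerSeries σ ℝ}
    (hf : coeff 0 f = 0) (hg : coeff 0 g = 0)
    {d : ℕ} (hfg : ∀ n : σ →₀ ℕ, n.degree < d → coeff n f = coeff n g) (n : σ →₀ ℕ)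
    (hn : n.degree < d + 1) : compCoeff h f n = compCoeff h g n := by
  refine sum_congr rfl fun m _ => ?_
  match m with
  | 0 => simp [h0]
  | 1 => simp [h1]
  | m + 2 => rw [coeff_pow_congr hf hg hfg (m + 1) n (by omega)]

section FixedPoint

variable {β E : (σ →₀ ℕ) → ℝ} {h : ℕ → ℝ}

theorem coeff_zero_iterate (hβ : β 0 = 0) (hE : E 0 = 0) (N : ℕ) :
    coeff 0 (iterate β E h N) = 0 := by
  cases N with
  | zero => rfl
  | succ N => rw [coeff_iterate_succ, hβ, hE, zero_mul, add_zero]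

theorem coeff_iterate_stable (h0 : h 0 = 0) (h1 : h 1 = 0) (hβ : β 0 = 0) (hE : E 0 = 0) (N : ℕ) :
    ∀ n : σ →₀ ℕ, n.degree < N + 1 →
      coeff n (iterate β E h N) = coeff n (iterate β E h (N + 1)) := by
  induction N with
  | zero =>
    intro n hn
    rw [(Finsupp.degree_eq_zero_iff n).1 (by omega), coeff_zero_iterate hβ hE,
      coeff_zero_iterate hβ hE]
  | succ N ih =>
    intro n hn
    rw [coeff_iterate_succ, coeff_iterate_succ _ _ _ (N + 1),
      compCoeff_congr h0 h1 (coeff_zero_iterate hβ hE _) (coeff_zero_iterate hβ hE _) ih n hn]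

theorem coeff_iterate_eq (h0 : h 0 = 0) (h1 : h 1 = 0) (hβ : β 0 = 0) (hE : E 0 = 0)
    (n : σ →₀ ℕ) {N : ℕ} (hN : n.degree ≤ N) :
    coeff n (iterate β E h N) = coeff n (iterate β E h n.degree) := by
  induction N, hN using Nat.le_induction with
  | base => rfl
  | succ N hN ih => rw [← coeff_iterate_stable h0 h1 hβ hE N n (by omega), ih]

theorem wnorm_iterate_le (r C M : ℝ≥0∞) (hC : ∀ n, ‖E n‖ₑ ≤ C)
    (hM : ∑' n, ‖β n‖ₑ * r ^ n.degree + C * ∑' m, ‖h m‖ₑ * M ^ m ≤ M) (N : ℕ) :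
    wnorm r (iterate β E h N) ≤ M := by
  induction N with
  | zero => simp [iterate, wnorm]
  | succ N ih =>
    refine le_trans ?_ hM
    calc wnorm r (iterate β E h (N + 1))
        ≤ ∑' n, (‖β n‖ₑ * r ^ n.degree
            + C * (‖compCoeff h (iterate β E h N) n‖ₑ * r ^ n.degree)) := by
          refine ENNReal.tsum_le_tsum fun n => ?_
          rw [coeff_iterate_succ]
          refine (mul_le_mul_left (enorm_add_le _ _) _).trans ?_
          rw [add_mul, enorm_mul, mul_assoc]
          gcongr
          exact hC n
      _ = ∑' n, ‖β n‖ₑ * r ^ n.degree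
            + C * ∑' n, ‖compCoeff h (iterate β E h N) n‖ₑ * r ^ n.degree := by
          rw [ENNReal.tsum_add, ENNReal.tsum_mul_left]
      _ ≤ _ := by
          gcongr
          exact tsum_enorm_compCoeff_le h r M _ ih

variable (β E h) in
/-- The limit of the Picard iterates in the topology of formal power series. -/
noncomputable def fixedPoint : MvPowerSeries σ ℝ :=
  fun n => coeff n (iterate β E h n.degree)

theorem coeff_fixedPoint_of_le (h0 : h 0 = 0) (h1 : h 1 = 0) (hβ : β 0 = 0) (hE : E 0 = 0)
    (n : σ →₀ ℕ) {N : ℕ} (hN : n.degree ≤ N) :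
    coeff n (fixedPoint β E h) = coeff n (iterate β E h N) :=
  (coeff_iterate_eq h0 h1 hβ hE n hN).symm

theorem coeff_zero_fixedPoint (hβ : β 0 = 0) (hE : E 0 = 0) :
    coeff 0 (fixedPoint β E h) = 0 :=
  coeff_zero_iterate hβ hE _

theorem coeff_fixedPoint (h0 : h 0 = 0) (h1 : h 1 = 0) (hβ : β 0 = 0) (hE : E 0 = 0)
    (n : σ →₀ ℕ) :
    coeff n (fixedPoint β E h) = β n + E n * compCoeff h (fixedPoint β E h) n := by
  rw [coeff_fixedPoint_of_le h0 h1 hβ hE n (Nat.le_succ n.degree), coeff_iterate_succ,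
    compCoeff_congr h0 h1 (coeff_zero_fixedPoint hβ hE) (coeff_zero_iterate hβ hE n.degree)
      (d := n.degree + 1)
      (fun k hk => coeff_fixedPoint_of_le h0 h1 hβ hE k (Nat.le_of_lt_succ hk)) n (by omega)]

theorem wnorm_fixedPoint_le (h0 : h 0 = 0) (h1 : h 1 = 0) (hβ : β 0 = 0) (hE : E 0 = 0)
    (r C M : ℝ≥0∞) (hC : ∀ n, ‖E n‖ₑ ≤ C)
    (hM : ∑' n, ‖β n‖ₑ * r ^ n.degree + C * ∑' m, ‖h m‖ₑ * M ^ m ≤ M) :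
    wnorm r (fixedPoint β E h) ≤ M := by
  rw [wnorm, ENNReal.tsum_eq_iSup_sum]
  refine iSup_le fun s => ?_
  refine le_trans ?_ (wnorm_iterate_le r C M hC hM (s.sup Finsupp.degree))
  refine le_trans (le_of_eq (sum_congr rfl fun n hn => ?_)) (ENNReal.sum_le_tsum s)
  rw [coeff_fixedPoint_of_le h0 h1 hβ hE n (le_sup (f := Finsupp.degree) hn)]

theorem coeff_fixedPoint_symm (e : (σ →₀ ℕ) ≃+ (σ →₀ ℕ)) (he : ∀ n, (e n).degree = n.degree)
    (hβ : ∀ n, β (e n) = β n) (hE : ∀ n, E (e n) = E n) (n : σ →₀ ℕ) :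
    coeff (e n) (fixedPoint β E h) = coeff n (fixedPoint β E h) := by
  have key : ∀ N n, coeff (e n) (iterate β E h N) = coeff n (iterate β E h N) := by
    intro N
    induction N with
    | zero => intro n; rfl
    | succ N ih =>
      intro n
      rw [coeff_iterate_succ, coeff_iterate_succ, hβ, hE, compCoeff, compCoeff, he]
      simp_rw [coeff_pow_symm e ih]
  change coeff (e n) (iterate β E h (e n).degree) = coeff n (iterate β E h n.degree)
  rw [he, key]

end FixedPoint

section Evaluation

variable {r : ℝ≥0∞} {χ : (σ →₀ ℕ) → ℂ}

theorem enorm_complex_ofReal (x : ℝ) : ‖(x : ℂ)‖ₑ = ‖x‖ₑ := by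
  rw [← ofReal_norm, ← ofReal_norm, Complex.norm_real]

/-- Evaluation of a power series, given the values of the monomials. -/
noncomputable def eval (χ : (σ →₀ ℕ) → ℂ) (f : MvPowerSeries σ ℝ) : ℂ :=
  ∑' n, ((coeff n f : ℝ) : ℂ) * χ n

theorem tsum_enorm_le_wnorm (hχ : ∀ n, ‖χ n‖ₑ ≤ r ^ n.degree) (f : MvPowerSeries σ ℝ) :
    ∑' n, ‖((coeff n f : ℝ) : ℂ) * χ n‖ₑ ≤ wnorm r f := by
  refine ENNReal.tsum_le_tsum fun n => ?_
  rw [enorm_mul]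
  refine mul_le_mul' (le_of_eq ?_) (hχ n)
  exact enorm_complex_ofReal _

theorem summable_norm_eval (hχ : ∀ n, ‖χ n‖ₑ ≤ r ^ n.degree) {f : MvPowerSeries σ ℝ}
    (hf : wnorm r f ≠ ∞) : Summable fun n => ‖((coeff n f : ℝ) : ℂ) * χ n‖ := by
  rw [← tsum_enorm_ne_top_iff_summable_norm]
  exact ne_top_of_le_ne_top hf (tsum_enorm_le_wnorm hχ f)

theorem eval_mul (hχ : ∀ n, ‖χ n‖ₑ ≤ r ^ n.degree) (hmul : ∀ i j, χ (i + j) = χ i * χ j)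
    {f g : MvPowerSeries σ ℝ} (hf : wnorm r f ≠ ∞) (hg : wnorm r g ≠ ∞) :
    eval χ (f * g) = eval χ f * eval χ g := by
  classical
  have hf' := summable_norm_eval hχ hf
  have hg' := summable_norm_eval hχ hg
  have hfg := summable_mul_of_summable_norm hf' hg'
  refine Eq.trans ?_ (hf'.of_norm.tsum_mul_tsum_eq_tsum_sum_antidiagonal hg'.of_norm hfg).symm
  refine tsum_congr fun n => ?_
  rw [coeff_mul, Complex.ofReal_sum, sum_mul]
  refine sum_congr rfl fun p hp => ?_
  rw [HasAntidiagonal.mem_antidiagonal] at hp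
  rw [← hp, hmul]
  push_cast
  ring

theorem eval_pow (hχ : ∀ n, ‖χ n‖ₑ ≤ r ^ n.degree) (hmul : ∀ i j, χ (i + j) = χ i * χ j)
    (hone : χ 0 = 1) {f : MvPowerSeries σ ℝ} (hf : wnorm r f ≠ ∞) (m : ℕ) :
    eval χ (f ^ m) = eval χ f ^ m := by
  classical
  induction m with
  | zero =>
    rw [pow_zero, pow_zero, eval, tsum_eq_single 0]
    · simp [hone]
    · intro n hn
      simp [coeff_one, hn]
  | succ m ih =>
    rw [pow_succ, pow_succ, eval_mul hχ hmul _ hf, ih]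
    exact ne_top_of_le_ne_top (ENNReal.pow_ne_top hf) (wnorm_pow_le r f m)

theorem tsum_compCoeff_mul (hχ : ∀ n, ‖χ n‖ₑ ≤ r ^ n.degree)
    (hmul : ∀ i j, χ (i + j) = χ i * χ j) (hone : χ 0 = 1) {f : MvPowerSeries σ ℝ}
    (hf0 : coeff 0 f = 0) {M : ℝ≥0∞} (hM : M ≠ ∞) (hf : wnorm r f ≤ M) {h : ℕ → ℝ}
    (hh : ∑' m, ‖h m‖ₑ * M ^ m ≠ ∞) :
    ∑' n, (compCoeff h f n : ℂ) * χ n = ∑' m, (h m : ℂ) * eval χ f ^ m := by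
  have hS : Summable (Function.uncurry fun (n : σ →₀ ℕ) (m : ℕ) =>
      (h m : ℂ) * (((coeff n (f ^ m) : ℝ) : ℂ) * χ n)) := by
    refine Summable.of_norm ?_
    rw [← tsum_enorm_ne_top_iff_summable_norm]
    refine ne_top_of_le_ne_top hh ?_
    rw [ENNReal.tsum_prod', ENNReal.tsum_comm]
    refine ENNReal.tsum_le_tsum fun m => ?_
    simp only [Function.uncurry_apply_pair, enorm_mul (h m : ℂ)]
    rw [ENNReal.tsum_mul_left]
    refine mul_le_mul' (le_of_eq (enorm_complex_ofReal _)) ?_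
    exact (tsum_enorm_le_wnorm hχ _).trans ((wnorm_pow_le _ _ _).trans (pow_le_pow_left' hf m))
  calc ∑' n, (compCoeff h f n : ℂ) * χ n
      = ∑' n, ∑' m, (h m : ℂ) * (((coeff n (f ^ m) : ℝ) : ℂ) * χ n) := by
        refine tsum_congr fun n => ?_
        rw [tsum_eq_sum (s := range (n.degree + 1)), compCoeff, Complex.ofReal_sum, sum_mul]
        · refine sum_congr rfl fun m _ => ?_
          push_cast
          ring
        · intro m hm
          rw [coeff_pow_eq_zero_of_degree_lt hf0 m n (by simpa using hm)]
          simp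
    _ = ∑' m, ∑' n, (h m : ℂ) * (((coeff n (f ^ m) : ℝ) : ℂ) * χ n) := hS.tsum_comm.symm
    _ = _ := by
        refine tsum_congr fun m => ?_
        rw [tsum_mul_left, ← eval_pow hχ hmul hone (ne_top_of_le_ne_top hM hf), eval]

end Evaluation

section TwoVariables

theorem degree_fin_two (n : Fin 2 →₀ ℕ) : n.degree = n 0 + n 1 := by
  rw [Finsupp.degree_eq_sum, Fin.sum_univ_two]

/-- Exchange of the two exponents. -/
noncomputable def swapExp : (Fin 2 →₀ ℕ) ≃+ (Fin 2 →₀ ℕ) :=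
  Finsupp.domCongr (Equiv.swap 0 1)

@[simp] theorem swapExp_zero (n : Fin 2 →₀ ℕ) : swapExp n 0 = n 1 := by
  simp [swapExp, Finsupp.equivMapDomain_apply]

@[simp] theorem swapExp_one (n : Fin 2 →₀ ℕ) : swapExp n 1 = n 0 := by
  simp [swapExp, Finsupp.equivMapDomain_apply]

theorem degree_swapExp (n : Fin 2 →₀ ℕ) : (swapExp n).degree = n.degree := by
  rw [degree_fin_two, degree_fin_two, swapExp_zero, swapExp_one, add_comm]

/-- The exponent `(j, k)` with `j + k = l` and `j - k = s`. -/
noncomputable def modeExp (l s : ℕ) : Fin 2 →₀ ℕ :=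
  Finsupp.equivFunOnFinite.symm ![(l + s) / 2, (l - s) / 2]

@[simp] theorem modeExp_zero (l s : ℕ) : modeExp l s 0 = (l + s) / 2 := rfl

@[simp] theorem modeExp_one (l s : ℕ) : modeExp l s 1 = (l - s) / 2 := rfl

open Classical in
/-- The coefficients of `e^{-lξ} cos(sτ)` associated with a symmetric double power series in
`e^{-ξ+iτ}`, `e^{-ξ-iτ}` with coefficients `c`. -/
noncomputable def modeCoeff (c : (Fin 2 →₀ ℕ) → ℝ) (l s : ℕ) : ℝ :=
  if Odd l ∧ Odd s ∧ s ≤ l then 2 * c (modeExp l s) else 0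

theorem of_modeCoeff_ne_zero {c : (Fin 2 →₀ ℕ) → ℝ} {l s : ℕ} (h : modeCoeff c l s ≠ 0) :
    Odd l ∧ Odd s ∧ s ≤ l := by
  by_contra hn
  exact h (if_neg hn)

theorem hasSum_comp_swapExp {G : (Fin 2 →₀ ℕ) → ℝ} {a : ℝ} (h : HasSum G a) :
    HasSum (fun n => G (swapExp n)) a := by
  refine (swapExp.injective.hasSum_iff (f := G) fun n hn => ?_).2 h
  exact absurd (swapExp.surjective n) hn

theorem hasSum_modeCoeff {c : (Fin 2 →₀ ℕ) → ℝ} (hsymm : ∀ n, c (swapExp n) = c n)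
    (hodd : ∀ n, ¬ Odd n.degree → c n = 0) (w : ℕ → ℝ) (τ : ℝ)
    (hs : Summable fun n => |c n * w n.degree|) :
    HasSum (fun p : ℕ × ℕ => modeCoeff c p.1 p.2 * w p.1 * Real.cos (p.2 * τ))
      (∑' n, c n * (w n.degree * Real.cos (((n 0 : ℝ) - n 1) * τ))) := by
  set F : (Fin 2 →₀ ℕ) → ℝ := fun n =>
    c n * (w n.degree * Real.cos (((n 0 : ℝ) - n 1) * τ)) with hF
  have hFs : Summable F := by
    refine Summable.of_norm_bounded hs fun n => ?_
    simp only [hF, Real.norm_eq_abs]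
    rw [← mul_assoc, abs_mul]
    exact mul_le_of_le_one_right (abs_nonneg _) (Real.abs_cos_le_one _)
  have hFsymm : ∀ n, F (swapExp n) = F n := by
    intro n
    simp only [hF, hsymm, degree_swapExp, swapExp_zero, swapExp_one]
    rw [← Real.cos_neg, ← neg_mul, neg_sub]
  set G : (Fin 2 →₀ ℕ) → ℝ := fun n => if n 1 < n 0 then F n else 0 with hG
  have hGs : Summable G := by
    refine Summable.of_norm_bounded hFs.norm fun n => ?_
    simp only [hG]
    split_ifs <;> simp
  have hsplit : ∀ n, F n = G n + G (swapExp n) := by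
    intro n
    simp only [hG, swapExp_zero, swapExp_one, hFsymm]
    rcases lt_trichotomy (n 0) (n 1) with h | h | h
    · simp [h, h.le]
    · have : F n = 0 := by
        simp only [hF]
        rw [hodd n (by rw [degree_fin_two, h]; simp), zero_mul]
      simp [this]
    · simp [h, h.le]
  have hsum : HasSum (fun n => 2 * G n) (∑' n, F n) := by
    have h1 := hGs.hasSum
    have h2 : HasSum (fun n => G (swapExp n)) (∑' n, G n) :=
      hasSum_comp_swapExp h1
    have h3 : ∑' n, F n = 2 * ∑' n, G n := by
      rw [two_mul, ← (h1.add h2).tsum_eq]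
      exact tsum_congr hsplit
    rw [h3]
    exact h1.mul_left 2
  refine (hasSum_iff_hasSum_of_ne_zero_bij (fun p => modeExp p.1.1 p.1.2) ?_ ?_ ?_).1 hsum
  · rintro ⟨⟨l, s⟩, hp⟩ ⟨⟨l', s'⟩, hp'⟩ h
    have h1 := of_modeCoeff_ne_zero (left_ne_zero_of_mul (left_ne_zero_of_mul hp))
    have h2 := of_modeCoeff_ne_zero (left_ne_zero_of_mul (left_ne_zero_of_mul hp'))
    have e0 := DFunLike.congr_fun h 0
    have e1 := DFunLike.congr_fun h 1
    simp only [modeExp_zero, modeExp_one] at e0 e1 h1 h2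
    have : l = l' ∧ s = s' := by grind
    simp [this]
  · intro n hn
    have hn' : G n ≠ 0 := right_ne_zero_of_mul hn
    have hlt : n 1 < n 0 := by
      by_contra h
      exact hn' (by simp [hG, h])
    have hFn : F n ≠ 0 := by simpa [hG, hlt] using hn'
    have hdeg : Odd (n 0 + n 1) := by
      by_contra h
      exact left_ne_zero_of_mul hFn (hodd n (by rwa [degree_fin_two]))
    have he : modeExp (n 0 + n 1) (n 0 - n 1) = n := by
      ext i
      fin_cases i
      · simp only [Fin.zero_eta, modeExp_zero]; omega
      · simp only [Fin.mk_one, modeExp_one]; omega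
    have hc : Odd (n 0 + n 1) ∧ Odd (n 0 - n 1) ∧ n 0 - n 1 ≤ n 0 + n 1 := by
      refine ⟨hdeg, ?_, by omega⟩
      grind
    refine ⟨⟨(n 0 + n 1, n 0 - n 1), ?_⟩, he⟩
    simp only [Function.mem_support, modeCoeff, if_pos hc, he]
    simp only [hF, degree_fin_two] at hFn
    rw [Nat.cast_sub hlt.le, mul_assoc, mul_assoc]
    exact mul_ne_zero two_ne_zero hFn
  · rintro ⟨⟨l, s⟩, hp⟩
    have hc := of_modeCoeff_ne_zero (left_ne_zero_of_mul (left_ne_zero_of_mul hp))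
    simp only at hc
    obtain ⟨hl, hs', hsl⟩ := hc
    have h1 : (l + s) / 2 + (l - s) / 2 = l := by grind
    have h2 : (l + s) / 2 = (l - s) / 2 + s := by grind
    have h3 : (((l + s) / 2 : ℕ) : ℝ) - ((l - s) / 2 : ℕ) = s := by
      rw [h2]; push_cast; ring
    have hlt : (l - s) / 2 < (l + s) / 2 := by
      have := hs'.pos
      omega
    simp only [hG, hF, modeExp_zero, modeExp_one, if_pos hlt, degree_fin_two, h1, h3, modeCoeff,
      if_pos (And.intro hl (And.intro hs' hsl))]
    ring

theorem summable_abs_modeCoeff {c : (Fin 2 →₀ ℕ) → ℝ} (hsymm : ∀ n, c (swapExp n) = c n)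
    (hodd : ∀ n, ¬ Odd n.degree → c n = 0) {w : ℕ → ℝ} (hw : ∀ l, 0 ≤ w l)
    (hs : Summable fun n => |c n| * w n.degree) :
    Summable fun p : ℕ × ℕ => |modeCoeff c p.1 p.2| * w p.1 := by
  have := (hasSum_modeCoeff (c := fun n => |c n|) (fun n => by rw [hsymm])
    (fun n hn => by rw [hodd n hn, abs_zero]) w 0 ?_).summable
  · refine this.congr fun p => ?_
    rw [mul_zero, Real.cos_zero, mul_one, modeCoeff, modeCoeff]
    split_ifs
    · rw [abs_mul, abs_two]
    · rw [abs_zero]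
  · refine hs.congr fun n => ?_
    rw [abs_of_nonneg (mul_nonneg (abs_nonneg _) (hw _))]

/-- The symbol of the linear operator acting on the monomial with exponents `n`. -/
noncomputable def symbol (ε : ℝ) (n : Fin 2 →₀ ℕ) : ℝ :=
  (1 - ε ^ 2) * ((n 0 : ℝ) - n 1) ^ 2 + ε ^ 2 * ((n 0 : ℝ) + n 1) ^ 2 - 1

theorem modeCoeff_symbol_mul (ε : ℝ) (c : (Fin 2 →₀ ℕ) → ℝ) (l s : ℕ) :
    modeCoeff (fun n => symbol ε n * c n) l s =
      ((1 - ε ^ 2) * (s : ℝ) ^ 2 + ε ^ 2 * (l : ℝ) ^ 2 - 1) * modeCoeff c l s := by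
  unfold modeCoeff
  split_ifs with h
  · obtain ⟨hl, hs', hsl⟩ := h
    have h1 : (l + s) / 2 + (l - s) / 2 = l := by grind
    have h2 : (l + s) / 2 = (l - s) / 2 + s := by grind
    have h3 : (((l + s) / 2 : ℕ) : ℝ) - ((l - s) / 2 : ℕ) = s := by
      rw [h2]; push_cast; ring
    have h4 : (((l + s) / 2 : ℕ) : ℝ) + ((l - s) / 2 : ℕ) = l := by
      exact_mod_cast h1
    simp only [symbol, modeExp_zero, modeExp_one, h3, h4]
    ring
  · rw [mul_zero]

theorem symbol_swapExp (ε : ℝ) (n : Fin 2 →₀ ℕ) : symbol ε (swapExp n) = symbol ε n := by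
  simp only [symbol, swapExp_zero, swapExp_one]
  ring

theorem symbol_of_degree_one (ε : ℝ) {n : Fin 2 →₀ ℕ} (hn : n.degree = 1) : symbol ε n = 0 := by
  rw [degree_fin_two] at hn
  have h : n 0 = 0 ∧ n 1 = 1 ∨ n 0 = 1 ∧ n 1 = 0 := by omega
  rcases h with ⟨h0, h1⟩ | ⟨h0, h1⟩ <;> simp [symbol, h0, h1]

theorem le_symbol {ε : ℝ} (hε : 0 < ε) (hε1 : ε < 1) {n : Fin 2 →₀ ℕ} (hodd : Odd n.degree)
    (hn : n.degree ≠ 1) : 8 * ε ^ 2 ≤ symbol ε n := by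
  rw [degree_fin_two] at hodd hn
  have h3 : 3 ≤ n 0 + n 1 := by
    have := hodd.pos
    rcases hodd with ⟨k, hk⟩
    omega
  have h3' : (3 : ℝ) ≤ (n 0 : ℝ) + n 1 := by exact_mod_cast h3
  have h1 : (1 : ℝ) ≤ ((n 0 : ℝ) - n 1) ^ 2 := by
    have hz : ((n 0 : ℤ) - n 1) ≠ 0 := by
      intro h
      have : n 0 = n 1 := by omega
      rw [this] at hodd
      exact (Nat.not_odd_iff_even.2 (Even.add_self (n 1))) hodd
    have : (1 : ℤ) ≤ ((n 0 : ℤ) - n 1) ^ 2 := by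
      have := sq_nonneg ((n 0 : ℤ) - n 1)
      have h0 : ((n 0 : ℤ) - n 1) ^ 2 ≠ 0 := pow_ne_zero 2 hz
      omega
    exact_mod_cast this
  have hε2 : 0 ≤ 1 - ε ^ 2 := by nlinarith
  have h9 : (9 : ℝ) ≤ ((n 0 : ℝ) + n 1) ^ 2 := by nlinarith
  have e1 := mul_le_mul_of_nonneg_left h1 hε2
  have e2 := mul_le_mul_of_nonneg_left h9 (sq_nonneg ε)
  unfold symbol
  linarith

/-- The nonlinear part of `g`. -/
def nonlinearPart (g : ℕ → ℝ) (m : ℕ) : ℝ := if m = 1 then 0 else g m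

theorem tsum_nonlinearPart_le {g : ℕ → ℝ} (hodd : ∀ m, ¬ Odd m → g m = 0) {α : ℝ} (hα : 0 < α)
    (hbound : ∀ m, Odd m → |g m| ≤ α ^ (m - 1) / Nat.factorial m) {M : ℝ} (hM : 0 ≤ M)
    (hαM : α * M ≤ 1 / 2) :
    ∑' m, ‖nonlinearPart g m‖ₑ * ENNReal.ofReal M ^ m ≤ ENNReal.ofReal (2 * α * M ^ 2) := by
  have hb : ∀ m : ℕ, |nonlinearPart g (m + 2)| * M ^ (m + 2) ≤ α * M ^ 2 * (1 / 2) ^ m := by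
    intro m
    have h1 : |nonlinearPart g (m + 2)| ≤ α ^ (m + 1) := by
      rw [nonlinearPart, if_neg (by omega)]
      by_cases h : Odd (m + 2)
      · refine (hbound _ h).trans (div_le_self (by positivity) ?_)
        exact_mod_cast Nat.factorial_pos _
      · rw [hodd _ h, abs_zero]
        positivity
    calc |nonlinearPart g (m + 2)| * M ^ (m + 2) ≤ α ^ (m + 1) * M ^ (m + 2) := by gcongr
      _ = α * M ^ 2 * (α * M) ^ m := by ring
      _ ≤ α * M ^ 2 * (1 / 2) ^ m := by gcongr
  rw [← Summable.sum_add_tsum_nat_add' (f := fun m => ‖nonlinearPart g m‖ₑ * ENNReal.ofReal M ^ m)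
    (k := 2) ENNReal.summable]
  · rw [sum_range_succ, sum_range_one]
    have h0 : nonlinearPart g 0 = 0 := by rw [nonlinearPart, if_neg (by omega), hodd 0 (by simp)]
    have h1 : nonlinearPart g 1 = 0 := if_pos rfl
    rw [h0, h1, enorm_zero, zero_mul, zero_mul, add_zero, zero_add]
    have hg := (hasSum_geometric_two).mul_left (α * M ^ 2)
    calc ∑' m : ℕ, ‖nonlinearPart g (m + 2)‖ₑ * ENNReal.ofReal M ^ (m + 2)
        ≤ ∑' m : ℕ, ENNReal.ofReal (α * M ^ 2 * (1 / 2) ^ m) := by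
          refine ENNReal.tsum_le_tsum fun m => ?_
          rw [← ofReal_norm, Real.norm_eq_abs, ← ENNReal.ofReal_pow hM,
            ← ENNReal.ofReal_mul (abs_nonneg _)]
          exact ENNReal.ofReal_le_ofReal (hb m)
      _ = ENNReal.ofReal (2 * α * M ^ 2) := by
          rw [← ENNReal.ofReal_tsum_of_nonneg (fun m => by positivity) hg.summable, hg.tsum_eq]
          congr 1
          ring

theorem eq_single_of_degree_one {n : Fin 2 →₀ ℕ} (hn : n.degree = 1) :
    n = Finsupp.single 0 1 ∨ n = Finsupp.single 1 1 := by
  rw [degree_fin_two] at hn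
  have h : n 0 = 1 ∧ n 1 = 0 ∨ n 0 = 0 ∧ n 1 = 1 := by omega
  rcases h with ⟨h0, h1⟩ | ⟨h0, h1⟩
  · left; ext i; fin_cases i <;> simp [h0, h1]
  · right; ext i; fin_cases i <;> simp [h0, h1]

theorem exists_formalSolution {g : ℕ → ℝ} (hodd : ∀ m, ¬ Odd m → g m = 0) {α : ℝ} (hα : 0 < α)
    (hbound : ∀ m, Odd m → |g m| ≤ α ^ (m - 1) / Nat.factorial m) {ε : ℝ} (hε : 0 < ε)
    (hε1 : ε < 1) :
    ∃ (f : MvPowerSeries (Fin 2) ℝ) (ρ : ℝ) (M : ℝ≥0∞), 0 < ρ ∧ M ≠ ∞ ∧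
      ∑' m, ‖nonlinearPart g m‖ₑ * M ^ m ≠ ∞ ∧ wnorm (ENNReal.ofReal ρ) f ≤ M ∧
      (∀ n, coeff (swapExp n) f = coeff n f) ∧ (∀ n, ¬ Odd n.degree → coeff n f = 0) ∧
      (∀ n, n.degree = 1 → coeff n f = ε / 2) ∧
      ∀ n, symbol ε n * coeff n f = compCoeff (nonlinearPart g) f n := by
  classical
  set β : (Fin 2 →₀ ℕ) → ℝ := fun n => if n.degree = 1 then ε / 2 else 0 with hβdef
  set E : (Fin 2 →₀ ℕ) → ℝ := fun n =>
    if Odd n.degree ∧ n.degree ≠ 1 then (symbol ε n)⁻¹ else 0 with hEdef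
  set h := nonlinearPart g with hh
  have h0 : h 0 = 0 := by rw [hh, nonlinearPart, if_neg (by omega), hodd 0 (by simp)]
  have h1 : h 1 = 0 := if_pos rfl
  have hβ : β 0 = 0 := by simp [hβdef]
  have hE : E 0 = 0 := by simp [hEdef]
  set C : ℝ := (8 * ε ^ 2)⁻¹ with hC
  have hCpos : 0 < C := by positivity
  set M : ℝ := min (1 / (4 * α * C)) (1 / (2 * α)) with hMdef
  have hMpos : 0 < M := by positivity
  have hM1 : α * M ≤ 1 / 2 := by
    calc α * M ≤ α * (1 / (2 * α)) := by gcongr; exact min_le_right _ _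
      _ = 1 / 2 := by field_simp
  have hM2 : C * (2 * α * M ^ 2) ≤ M / 2 := by
    have : 4 * α * C * M ≤ 1 := by
      calc 4 * α * C * M ≤ 4 * α * C * (1 / (4 * α * C)) := by gcongr; exact min_le_left _ _
        _ = 1 := by field_simp
    nlinarith
  set ρ : ℝ := M / (2 * ε) with hρ
  have hρpos : 0 < ρ := by positivity
  have hsum := tsum_nonlinearPart_le hodd hα hbound hMpos.le hM1
  have hEC : ∀ n, ‖E n‖ₑ ≤ ENNReal.ofReal C := by
    intro n
    rw [← ofReal_norm]
    refine ENNReal.ofReal_le_ofReal ?_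
    simp only [hEdef]
    split_ifs with hn
    · have hle := le_symbol hε hε1 hn.1 hn.2
      have hpos : 0 < 8 * ε ^ 2 := by positivity
      rw [norm_inv, Real.norm_eq_abs, abs_of_pos (hpos.trans_le hle)]
      exact inv_anti₀ hpos hle
    · simpa using hCpos.le
  have hβsum : ∑' n, ‖β n‖ₑ * ENNReal.ofReal ρ ^ n.degree ≤ ENNReal.ofReal (M / 2) := by
    rw [tsum_eq_sum (s := {Finsupp.single 0 1, Finsupp.single 1 1})]
    · rw [sum_pair (by simp [Finsupp.single_left_inj])]
      have e : ∀ i : Fin 2, ‖β (Finsupp.single i 1)‖ₑ * ENNReal.ofReal ρ ^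
          (Finsupp.single i 1 : Fin 2 →₀ ℕ).degree = ENNReal.ofReal (M / 4) := by
        intro i
        simp only [hβdef, Finsupp.degree_single, if_true, pow_one]
        rw [← ofReal_norm, Real.norm_eq_abs, abs_of_pos (by positivity),
          ← ENNReal.ofReal_mul (by positivity)]
        congr 1
        rw [hρ]
        field_simp
        norm_num
      rw [e, e, ← ENNReal.ofReal_add (by positivity) (by positivity)]
      exact le_of_eq (by congr 1; ring)
    · intro n hn
      have : n.degree ≠ 1 := by
        intro hd
        rcases eq_single_of_degree_one hd with rfl | rfl <;> simp at hn
      simp [hβdef, this]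
  have hMle : ∑' n, ‖β n‖ₑ * ENNReal.ofReal ρ ^ n.degree
      + ENNReal.ofReal C * ∑' m, ‖h m‖ₑ * ENNReal.ofReal M ^ m ≤ ENNReal.ofReal M := by
    calc _ ≤ ENNReal.ofReal (M / 2) + ENNReal.ofReal C * ENNReal.ofReal (2 * α * M ^ 2) := by
          gcongr
      _ ≤ ENNReal.ofReal (M / 2) + ENNReal.ofReal (M / 2) := by
          rw [← ENNReal.ofReal_mul hCpos.le]
          gcongr
      _ = ENNReal.ofReal M := by
          rw [← ENNReal.ofReal_add (by positivity) (by positivity), add_halves]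
  have hfix := coeff_fixedPoint (β := β) (E := E) h0 h1 hβ hE
  have hf0 : coeff 0 (fixedPoint β E h) = 0 := coeff_zero_fixedPoint hβ hE
  have hfodd : ∀ n, ¬ Odd n.degree → coeff n (fixedPoint β E h) = 0 := by
    intro n hn
    have hn1 : n.degree ≠ 1 := by
      intro h
      simp [h] at hn
    rw [hfix]
    simp [hβdef, hEdef, hn, hn1]
  refine ⟨fixedPoint β E h, ρ, ENNReal.ofReal M, hρpos, ENNReal.ofReal_ne_top,
    ne_top_of_le_ne_top ENNReal.ofReal_ne_top hsum,
    wnorm_fixedPoint_le h0 h1 hβ hE _ _ _ hEC hMle, ?_, hfodd, ?_, ?_⟩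
  · refine coeff_fixedPoint_symm swapExp degree_swapExp (fun n => ?_) (fun n => ?_)
    · simp only [hβdef, degree_swapExp]
    · simp only [hEdef, degree_swapExp, symbol_swapExp]
  · intro n hn
    rw [hfix]
    simp [hβdef, hEdef, hn]
  · intro n
    by_cases hn : Odd n.degree
    · by_cases hn1 : n.degree = 1
      · rw [symbol_of_degree_one ε hn1, zero_mul, compCoeff, hn1, sum_range_succ, sum_range_one,
          h0, h1]
        simp
      · have hpos : symbol ε n ≠ 0 :=
          ((by positivity : 0 < 8 * ε ^ 2).trans_le (le_symbol hε hε1 hn hn1)).ne'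
        rw [hfix]
        simp only [hβdef, hEdef, if_neg hn1, if_pos (And.intro hn hn1), zero_add]
        rw [mul_inv_cancel_left₀ hpos]
    · rw [hfodd n hn, mul_zero, compCoeff]
      refine (sum_eq_zero fun m _ => ?_).symm
      by_cases hm : Odd m
      · rw [coeff_pow_eq_zero_of_parity hfodd m n, mul_zero]
        rw [Nat.not_odd_iff_even] at hn
        exact hn.add_odd hm
      · have : h m = 0 := by
          rw [hh, nonlinearPart, hodd m hm, ite_self]
        rw [this, zero_mul]

end TwoVariables
section Modes

/-- The value of the monomial with exponents `n` in `e^{-ξ+iτ}` and `e^{-ξ-iτ}`. -/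
noncomputable def monomialValue (ξ τ : ℝ) (n : Fin 2 →₀ ℕ) : ℂ :=
  Complex.exp ⟨-(n.degree : ℝ) * ξ, ((n 0 : ℝ) - n 1) * τ⟩

theorem monomialValue_zero (ξ τ : ℝ) : monomialValue ξ τ 0 = 1 := by
  rw [monomialValue, ← Complex.exp_zero]
  congr 1
  apply Complex.ext <;> simp

theorem monomialValue_add (ξ τ : ℝ) (i j : Fin 2 →₀ ℕ) :
    monomialValue ξ τ (i + j) = monomialValue ξ τ i * monomialValue ξ τ j := by
  rw [monomialValue, monomialValue, monomialValue, ← Complex.exp_add]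
  congr 1
  apply Complex.ext
  · simp only [map_add, Nat.cast_add, Complex.add_re]
    ring
  · simp only [Finsupp.add_apply, Nat.cast_add, Complex.add_im]
    ring

theorem norm_monomialValue (ξ τ : ℝ) (n : Fin 2 →₀ ℕ) :
    ‖monomialValue ξ τ n‖ = Real.exp (-(n.degree : ℝ) * ξ) := by
  rw [monomialValue, Complex.norm_exp]

theorem enorm_monomialValue_le {ξ ρ : ℝ} (h : Real.exp (-ξ) ≤ ρ) (τ : ℝ) (n : Fin 2 →₀ ℕ) :
    ‖monomialValue ξ τ n‖ₑ ≤ ENNReal.ofReal ρ ^ n.degree := by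
  rw [← ofReal_norm, norm_monomialValue, ← ENNReal.ofReal_pow ((Real.exp_pos _).le.trans h)]
  refine ENNReal.ofReal_le_ofReal ?_
  rw [neg_mul, ← mul_neg, Real.exp_nat_mul]
  gcongr

theorem summable_abs_coeff {f : MvPowerSeries (Fin 2) ℝ} {ξ ρ : ℝ} (h : Real.exp (-ξ) ≤ ρ)
    (hf : wnorm (ENNReal.ofReal ρ) f ≠ ∞) :
    Summable fun n => |coeff n f| * Real.exp (-(n.degree : ℝ) * ξ) := by
  refine (summable_norm_eval (enorm_monomialValue_le h 0) hf).congr fun n => ?_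
  rw [norm_mul, norm_monomialValue, Complex.norm_real, Real.norm_eq_abs]

theorem re_eval_monomialValue {f : MvPowerSeries (Fin 2) ℝ} {ξ ρ : ℝ} (h : Real.exp (-ξ) ≤ ρ)
    (hf : wnorm (ENNReal.ofReal ρ) f ≠ ∞) (τ : ℝ) :
    (eval (monomialValue ξ τ) f).re =
      ∑' n, coeff n f * (Real.exp (-(n.degree : ℝ) * ξ) * Real.cos (((n 0 : ℝ) - n 1) * τ)) := by
  rw [eval, Complex.re_tsum (summable_norm_eval (enorm_monomialValue_le h τ) hf).of_norm]
  refine tsum_congr fun n => ?_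
  rw [Complex.re_ofReal_mul, monomialValue, Complex.exp_re]

theorem im_eval_monomialValue {f : MvPowerSeries (Fin 2) ℝ} {ξ ρ : ℝ} (h : Real.exp (-ξ) ≤ ρ)
    (hf : wnorm (ENNReal.ofReal ρ) f ≠ ∞) (hsymm : ∀ n, coeff (swapExp n) f = coeff n f) (τ : ℝ) :
    (eval (monomialValue ξ τ) f).im = 0 := by
  have hs := Complex.hasSum_im (summable_norm_eval (enorm_monomialValue_le h τ) hf).of_norm.hasSum
  have hneg : HasSum (fun n => -((coeff n f : ℝ) * monomialValue ξ τ n : ℂ).im)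
      (eval (monomialValue ξ τ) f).im := by
    refine (hasSum_comp_swapExp hs).congr_fun fun n => ?_
    rw [hsymm, Complex.im_ofReal_mul, Complex.im_ofReal_mul, monomialValue, monomialValue,
      Complex.exp_im, Complex.exp_im, degree_swapExp, swapExp_zero, swapExp_one,
      ← neg_sub (n 0 : ℝ) (n 1), neg_mul _ τ, Real.sin_neg]
    ring
  have := hs.neg.unique hneg
  change -(eval (monomialValue ξ τ) f).im = _ at this
  linarith

theorem exists_modes {g : ℕ → ℝ} (hg1 : g 1 = 1) (hodd : ∀ m, ¬ Odd m → g m = 0) {α : ℝ}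
    (hα : 0 < α) (hbound : ∀ m, Odd m → |g m| ≤ α ^ (m - 1) / Nat.factorial m) {ε : ℝ}
    (hε : 0 < ε) (hε1 : ε < 1) :
    ∃ (ξ₀ : ℝ) (a : ℕ → ℕ → ℝ),
      (∀ l s, a l s ≠ 0 → Odd l ∧ Odd s ∧ s ≤ l) ∧ a 1 1 = ε ∧
      (∀ ξ : ℝ, ξ₀ < ξ → Summable fun p : ℕ × ℕ => |a p.1 p.2| * Real.exp (-(p.1 : ℝ) * ξ)) ∧
      ∀ ξ τ : ℝ, ξ₀ < ξ →
        ∑' m, g m * (∑' p : ℕ × ℕ,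
            a p.1 p.2 * Real.exp (-(p.1 : ℝ) * ξ) * Real.cos (p.2 * τ)) ^ m =
          ∑' p : ℕ × ℕ, ((1 - ε ^ 2) * (p.2 : ℝ) ^ 2 + ε ^ 2 * (p.1 : ℝ) ^ 2) *
            (a p.1 p.2 * Real.exp (-(p.1 : ℝ) * ξ) * Real.cos (p.2 * τ)) := by
  obtain ⟨f, ρ, M, hρ, hM, hh, hf, hsymm, hfodd, hf1, hfeq⟩ :=
    exists_formalSolution hodd hα hbound hε hε1
  have hftop : wnorm (ENNReal.ofReal ρ) f ≠ ∞ := ne_top_of_le_ne_top hM hf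
  have hexp : ∀ ξ, -Real.log ρ < ξ → Real.exp (-ξ) ≤ ρ := by
    intro ξ hξ
    rw [← Real.le_log_iff_exp_le hρ]
    linarith
  refine ⟨-Real.log ρ, modeCoeff fun n => coeff n f, fun l s => of_modeCoeff_ne_zero, ?_, ?_, ?_⟩
  · have : (modeExp 1 1).degree = 1 := by simp [degree_fin_two]
    rw [modeCoeff, if_pos (by simp), hf1 _ this]
    ring
  · intro ξ hξ
    exact summable_abs_modeCoeff (w := fun l => Real.exp (-(l : ℝ) * ξ)) hsymm hfodd
      (fun l => (Real.exp_pos _).le) (summable_abs_coeff (hexp ξ hξ) hftop)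
  · intro ξ τ hξ
    have hξρ := hexp ξ hξ
    set k : MvPowerSeries (Fin 2) ℝ := fun n => symbol ε n * coeff n f with hk
    have hkc : ∀ n, coeff n k = symbol ε n * coeff n f := fun n => rfl
    have hktop : wnorm (ENNReal.ofReal ρ) k ≠ ∞ := by
      refine ne_top_of_le_ne_top hh (le_trans (le_of_eq ?_)
        (tsum_enorm_compCoeff_le (nonlinearPart g) (ENNReal.ofReal ρ) M f hf))
      exact tsum_congr fun n => by rw [hkc, hfeq]
    have hmode : ∀ c : MvPowerSeries (Fin 2) ℝ, wnorm (ENNReal.ofReal ρ) c ≠ ∞ →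
        (∀ n, coeff (swapExp n) c = coeff n c) → (∀ n, ¬ Odd n.degree → coeff n c = 0) →
        HasSum (fun p : ℕ × ℕ => modeCoeff (fun n => coeff n c) p.1 p.2 *
          Real.exp (-(p.1 : ℝ) * ξ) * Real.cos (p.2 * τ)) (eval (monomialValue ξ τ) c).re := by
      intro c hc hcs hco
      rw [re_eval_monomialValue hξρ hc]
      refine hasSum_modeCoeff (c := fun n => coeff n c) hcs hco (fun l => Real.exp (-(l : ℝ) * ξ)) τ ?_
      refine (summable_abs_coeff hξρ hc).congr fun n => ?_
      rw [abs_mul, Real.abs_exp]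
    have hFsum := hmode f hftop hsymm hfodd
    have hKsum := hmode k hktop
      (fun n => by rw [hkc, hkc, symbol_swapExp, hsymm])
      (fun n hn => by rw [hkc, hfodd n hn, mul_zero])
    set v := (eval (monomialValue ξ τ) f).re with hv
    have hveval : eval (monomialValue ξ τ) f = (v : ℂ) :=
      Complex.ext rfl (by simpa using im_eval_monomialValue hξρ hftop hsymm τ)
    have hf0 : coeff 0 f = 0 := hfodd 0 (by simp)
    have hχ := enorm_monomialValue_le hξρ τ
    have hcomp : eval (monomialValue ξ τ) k = ∑' m, (nonlinearPart g m : ℂ) * (v : ℂ) ^ m := by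
      rw [← hveval, ← tsum_compCoeff_mul hχ (monomialValue_add ξ τ) (monomialValue_zero ξ τ) hf0
        hM hf hh, eval]
      exact tsum_congr fun n => by rw [hkc, hfeq]
    have hcompR : (eval (monomialValue ξ τ) k).re = ∑' m, nonlinearPart g m * v ^ m := by
      rw [hcomp, ← Complex.ofReal_re (∑' m, nonlinearPart g m * v ^ m)]
      push_cast
      rfl
    have hsumm : Summable fun m => nonlinearPart g m * v ^ m := by
      refine Summable.of_norm ?_
      rw [← tsum_enorm_ne_top_iff_summable_norm]
      refine ne_top_of_le_ne_top hh (ENNReal.tsum_le_tsum fun m => ?_)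
      rw [enorm_mul, enorm_pow]
      gcongr
      rw [← enorm_complex_ofReal, ← hveval]
      refine le_trans ?_ ((tsum_enorm_le_wnorm hχ f).trans hf)
      exact enorm_tsum_le_tsum_enorm
    have hg : HasSum (fun m => g m * v ^ m) ((eval (monomialValue ξ τ) k).re + v) := by
      rw [hcompR]
      have h1 : HasSum (fun m : ℕ => if m = 1 then v else 0) v := hasSum_ite_eq 1 v
      refine (hsumm.hasSum.add h1).congr_fun fun m => ?_
      rw [nonlinearPart]
      split_ifs with hm
      · rw [hm, hg1]
        ring
      · rw [add_zero]
    rw [hFsum.tsum_eq, hg.tsum_eq, ← (hKsum.add hFsum).tsum_eq]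
    refine tsum_congr fun p => ?_
    have : modeCoeff (fun n => coeff n k) p.1 p.2 = _ :=
      modeCoeff_symbol_mul ε (fun n => coeff n f) p.1 p.2
    rw [this]
    ring

end Modes

section Calculus

theorem deriv_deriv_tsum {ι : Type*} {f f' f'' : ι → ℝ → ℝ} {v w : ι → ℝ} {S : Set ℝ}
    (hS : IsOpen S) (hS' : IsPreconnected S) {x : ℝ} (hx : x ∈ S)
    (hf : ∀ i, ∀ y ∈ S, HasDerivAt (f i) (f' i y) y)
    (hf' : ∀ i, ∀ y ∈ S, HasDerivAt (f' i) (f'' i y) y)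
    (hv : Summable v) (hw : Summable w) (hfv : ∀ i, ∀ y ∈ S, ‖f' i y‖ ≤ v i)
    (hfw : ∀ i, ∀ y ∈ S, ‖f'' i y‖ ≤ w i) (hsum : Summable fun i => f i x) :
    deriv (deriv fun y => ∑' i, f i y) x = ∑' i, f'' i x := by
  have h1 : deriv (fun y => ∑' i, f i y) =ᶠ[nhds x] fun y => ∑' i, f' i y := by
    filter_upwards [hS.mem_nhds hx] with y hy
    exact (hasDerivAt_tsum_of_isPreconnected hv hS hS' hf hfv hx hsum hy).deriv
  rw [h1.deriv_eq]
  exact (hasDerivAt_tsum_of_isPreconnected hw hS hS' hf' hfw hx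
    (Summable.of_norm_bounded hv fun i => hfv i x hx) hx).deriv

theorem sq_mul_exp_neg_le {δ : ℝ} (hδ : 0 < δ) (x : ℝ) (hx : 0 ≤ x) :
    x ^ 2 * Real.exp (-x * δ) ≤ 4 / δ ^ 2 := by
  have h1 : x * δ / 2 ≤ Real.exp (x * δ / 2) := by
    linarith [Real.add_one_le_exp (x * δ / 2)]
  have h2 : (x * δ / 2) ^ 2 ≤ Real.exp (x * δ) := by
    calc (x * δ / 2) ^ 2 ≤ Real.exp (x * δ / 2) ^ 2 := by gcongr
      _ = Real.exp (x * δ) := by rw [← Real.exp_nat_mul]; congr 1; push_cast; ring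
  rw [neg_mul, Real.exp_neg, ← div_eq_mul_inv, div_le_div_iff₀ (Real.exp_pos _) (by positivity)]
  linarith [h2, (by ring : (x * δ / 2) ^ 2 = x ^ 2 * δ ^ 2 / 4)]

theorem summable_sq_mul {ι : Type*} {c : ι → ℝ} {l : ι → ℕ} {ξ ξ' : ℝ} (h : ξ < ξ')
    (hs : Summable fun i => |c i| * Real.exp (-(l i : ℝ) * ξ)) :
    Summable fun i => (l i : ℝ) ^ 2 * (|c i| * Real.exp (-(l i : ℝ) * ξ')) := by
  refine Summable.of_nonneg_of_le (fun i => by positivity) (fun i => ?_)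
    (hs.mul_left (4 / (ξ' - ξ) ^ 2))
  have hb := sq_mul_exp_neg_le (sub_pos.2 h) (l i) (Nat.cast_nonneg _)
  calc (l i : ℝ) ^ 2 * (|c i| * Real.exp (-(l i : ℝ) * ξ'))
      = ((l i : ℝ) ^ 2 * Real.exp (-(l i : ℝ) * (ξ' - ξ))) *
          (|c i| * Real.exp (-(l i : ℝ) * ξ)) := by
        have : Real.exp (-(l i : ℝ) * ξ') =
            Real.exp (-(l i : ℝ) * (ξ' - ξ)) * Real.exp (-(l i : ℝ) * ξ) := by
          rw [← Real.exp_add]; congr 1; ring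
        rw [this]; ring
    _ ≤ _ := by gcongr

end Calculus

section Series

variable {ε ξ₀ : ℝ} {a : ℕ → ℕ → ℝ} {u : ℝ → ℝ → ℝ}

theorem modes_solve_equation {G : ℝ} (hε1 : ε ^ 2 ≤ 1) (hε : 0 < ε)
    (hsupp : ∀ l s, a l s ≠ 0 → Odd l ∧ Odd s ∧ s ≤ l)
    (hsum : ∀ ξ : ℝ, ξ₀ < ξ →
      Summable fun p : ℕ × ℕ => |a p.1 p.2| * Real.exp (-(p.1 : ℝ) * ξ))
    (hu : ∀ x t, u x t = ∑' p : ℕ × ℕ, a p.1 p.2 * Real.exp (-(p.1 : ℝ) * (ε * x)) *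
      Real.cos ((p.2 : ℝ) * (Real.sqrt (1 - ε ^ 2) * t))) {x t : ℝ} (hx : ξ₀ < ε * x)
    (hG : G = ∑' p : ℕ × ℕ, ((1 - ε ^ 2) * (p.2 : ℝ) ^ 2 + ε ^ 2 * (p.1 : ℝ) ^ 2) *
      (a p.1 p.2 * Real.exp (-(p.1 : ℝ) * (ε * x)) *
        Real.cos (p.2 * (Real.sqrt (1 - ε ^ 2) * t)))) :
    deriv (deriv fun t' => u x t') t - deriv (deriv fun x' => u x' t) x + G = 0 := by
  obtain ⟨ξ₁, h01, h1x⟩ := exists_between hx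
  obtain ⟨ξ₂, h02, h21⟩ := exists_between h01
  set ω := Real.sqrt (1 - ε ^ 2) with hω
  have hω2 : ω ^ 2 = 1 - ε ^ 2 := Real.sq_sqrt (by linarith)
  have hω0 : 0 ≤ ω := Real.sqrt_nonneg _
  have hs2 : Summable fun p : ℕ × ℕ =>
      (p.1 : ℝ) ^ 2 * (|a p.1 p.2| * Real.exp (-(p.1 : ℝ) * ξ₁)) :=
    summable_sq_mul (l := Prod.fst) (c := fun p : ℕ × ℕ => a p.1 p.2) h21 (hsum ξ₂ h02)
  have hl1 : ∀ p : ℕ × ℕ, a p.1 p.2 ≠ 0 → (1 : ℝ) ≤ p.1 := by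
    intro p hp
    exact_mod_cast (hsupp _ _ hp).1.pos
  have hsl : ∀ p : ℕ × ℕ, a p.1 p.2 ≠ 0 → (p.2 : ℝ) ≤ p.1 := by
    intro p hp
    exact_mod_cast (hsupp _ _ hp).2.2
  have hterm : ∀ (p : ℕ × ℕ) (y : ℝ), ξ₁ ≤ ε * y → ∀ K D : ℝ, 0 ≤ K →
      |D| ≤ 1 → ∀ q : ℝ, 0 ≤ q → (a p.1 p.2 ≠ 0 → q ≤ (p.1 : ℝ) ^ 2) →
      ‖K * q * (a p.1 p.2 * Real.exp (-(p.1 : ℝ) * (ε * y)) * D)‖ ≤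
        K * ((p.1 : ℝ) ^ 2 * (|a p.1 p.2| * Real.exp (-(p.1 : ℝ) * ξ₁))) := by
    intro p y hy K D hK hD q hq hqp
    by_cases hp : a p.1 p.2 = 0
    · simp [hp]
    · rw [Real.norm_eq_abs, abs_mul, abs_mul, abs_mul, abs_mul, Real.abs_exp, abs_of_nonneg hK,
        abs_of_nonneg hq, mul_assoc]
      have he : Real.exp (-(p.1 : ℝ) * (ε * y)) ≤ Real.exp (-(p.1 : ℝ) * ξ₁) := by
        apply Real.exp_le_exp.2
        rw [neg_mul, neg_mul]
        exact neg_le_neg (mul_le_mul_of_nonneg_left hy (Nat.cast_nonneg _))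
      refine mul_le_mul_of_nonneg_left ?_ hK
      refine mul_le_mul (hqp hp) ?_ (by positivity) (by positivity)
      calc |a p.1 p.2| * Real.exp (-(p.1 : ℝ) * (ε * y)) * |D|
          ≤ |a p.1 p.2| * Real.exp (-(p.1 : ℝ) * (ε * y)) * 1 := by gcongr
        _ ≤ _ := by rw [mul_one]; gcongr
  have hsumx : Summable fun p : ℕ × ℕ => a p.1 p.2 * Real.exp (-(p.1 : ℝ) * (ε * x)) *
      Real.cos ((p.2 : ℝ) * (ω * t)) := by
    refine Summable.of_norm_bounded (hsum _ hx) fun p => ?_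
    rw [Real.norm_eq_abs, abs_mul, abs_mul, Real.abs_exp]
    exact mul_le_of_le_one_right (by positivity) (Real.abs_cos_le_one _)
  have ht : deriv (deriv fun t' => u x t') t = ∑' p : ℕ × ℕ, -(ω ^ 2 * (p.2 : ℝ) ^ 2 *
      (a p.1 p.2 * Real.exp (-(p.1 : ℝ) * (ε * x)) * Real.cos ((p.2 : ℝ) * (ω * t)))) := by
    simp_rw [hu]
    refine deriv_deriv_tsum (S := Set.univ)
      (f := fun (p : ℕ × ℕ) t => a p.1 p.2 * Real.exp (-(p.1 : ℝ) * (ε * x)) *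
        Real.cos ((p.2 : ℝ) * (ω * t)))
      (f' := fun (p : ℕ × ℕ) t => -(ω * (p.2 : ℝ) * (a p.1 p.2 *
        Real.exp (-(p.1 : ℝ) * (ε * x)) * Real.sin ((p.2 : ℝ) * (ω * t)))))
      (f'' := fun (p : ℕ × ℕ) t => -(ω ^ 2 * (p.2 : ℝ) ^ 2 * (a p.1 p.2 *
        Real.exp (-(p.1 : ℝ) * (ε * x)) * Real.cos ((p.2 : ℝ) * (ω * t)))))
      isOpen_univ isPreconnected_univ (Set.mem_univ t) (fun p y _ => ?_) (fun p y _ => ?_)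
      (hs2.mul_left ω) (hs2.mul_left (ω ^ 2)) (fun p y _ => ?_) (fun p y _ => ?_) hsumx
    · have h := (((hasDerivAt_id y).const_mul ω).const_mul (p.2 : ℝ)).cos.const_mul
        (a p.1 p.2 * Real.exp (-(p.1 : ℝ) * (ε * x)))
      refine h.congr_deriv ?_
      simp only [id_eq]
      ring
    · have h := ((((hasDerivAt_id y).const_mul ω).const_mul (p.2 : ℝ)).sin.const_mul
        (a p.1 p.2 * Real.exp (-(p.1 : ℝ) * (ε * x)))).const_mul (ω * (p.2 : ℝ)) |>.neg
      refine h.congr_deriv ?_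
      simp only [id_eq]
      ring
    · rw [norm_neg]
      refine hterm p x h1x.le ω _ hω0 (Real.abs_sin_le_one _) _ (Nat.cast_nonneg _) fun hp => ?_
      nlinarith [hl1 p hp, hsl p hp]
    · rw [norm_neg]
      refine hterm p x h1x.le (ω ^ 2) _ (sq_nonneg _) (Real.abs_cos_le_one _) _ (sq_nonneg _)
        fun hp => ?_
      have := hsl p hp
      gcongr
  have hxx : deriv (deriv fun x' => u x' t) x = ∑' p : ℕ × ℕ, ε ^ 2 * (p.1 : ℝ) ^ 2 *
      (a p.1 p.2 * Real.exp (-(p.1 : ℝ) * (ε * x)) * Real.cos ((p.2 : ℝ) * (ω * t))) := by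
    simp_rw [hu]
    refine deriv_deriv_tsum (S := Set.Ioi (ξ₁ / ε))
      (f := fun (p : ℕ × ℕ) x => a p.1 p.2 * Real.exp (-(p.1 : ℝ) * (ε * x)) *
        Real.cos ((p.2 : ℝ) * (ω * t)))
      (f' := fun (p : ℕ × ℕ) x => -(ε * (p.1 : ℝ) * (a p.1 p.2 *
        Real.exp (-(p.1 : ℝ) * (ε * x)) * Real.cos ((p.2 : ℝ) * (ω * t)))))
      (f'' := fun (p : ℕ × ℕ) x => ε ^ 2 * (p.1 : ℝ) ^ 2 * (a p.1 p.2 *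
        Real.exp (-(p.1 : ℝ) * (ε * x)) * Real.cos ((p.2 : ℝ) * (ω * t))))
      isOpen_Ioi isPreconnected_Ioi ?_ (fun p y _ => ?_) (fun p y _ => ?_)
      (hs2.mul_left ε) (hs2.mul_left (ε ^ 2)) (fun p y hy => ?_) (fun p y hy => ?_) hsumx
    · rw [Set.mem_Ioi, div_lt_iff₀' hε]
      exact h1x
    · have h := (((((hasDerivAt_id y).const_mul ε).const_mul (-(p.1 : ℝ))).exp.const_mul
        (a p.1 p.2)).mul_const (Real.cos ((p.2 : ℝ) * (ω * t))))
      refine h.congr_deriv ?_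
      simp only [id_eq]
      ring
    · have h := (((((hasDerivAt_id y).const_mul ε).const_mul (-(p.1 : ℝ))).exp.const_mul
        (a p.1 p.2)).mul_const (Real.cos ((p.2 : ℝ) * (ω * t)))).const_mul
          (ε * (p.1 : ℝ)) |>.neg
      refine h.congr_deriv ?_
      simp only [id_eq]
      ring
    · rw [norm_neg]
      rw [Set.mem_Ioi, div_lt_iff₀' hε] at hy
      refine hterm p y hy.le ε _ hε.le (Real.abs_cos_le_one _) _ (Nat.cast_nonneg _) fun hp => ?_
      nlinarith [hl1 p hp]
    · rw [Set.mem_Ioi, div_lt_iff₀' hε] at hy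
      exact hterm p y hy.le (ε ^ 2) _ (sq_nonneg _) (Real.abs_cos_le_one _) _ (sq_nonneg _)
        fun hp => le_rfl
  have hst : Summable fun p : ℕ × ℕ => -(ω ^ 2 * (p.2 : ℝ) ^ 2 *
      (a p.1 p.2 * Real.exp (-(p.1 : ℝ) * (ε * x)) * Real.cos ((p.2 : ℝ) * (ω * t)))) := by
    refine Summable.of_norm_bounded (hs2.mul_left (ω ^ 2)) fun p => ?_
    rw [norm_neg]
    refine hterm p x h1x.le (ω ^ 2) _ (sq_nonneg _) (Real.abs_cos_le_one _) _ (sq_nonneg _)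
      fun hp => ?_
    have := hsl p hp
    gcongr
  have hsx : Summable fun p : ℕ × ℕ => ε ^ 2 * (p.1 : ℝ) ^ 2 *
      (a p.1 p.2 * Real.exp (-(p.1 : ℝ) * (ε * x)) * Real.cos ((p.2 : ℝ) * (ω * t))) :=
    Summable.of_norm_bounded (hs2.mul_left (ε ^ 2)) fun p =>
      hterm p x h1x.le (ε ^ 2) _ (sq_nonneg _) (Real.abs_cos_le_one _) _ (sq_nonneg _)
        fun hp => le_rfl
  have hG' : G = ∑' p : ℕ × ℕ, ε ^ 2 * (p.1 : ℝ) ^ 2 *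
      (a p.1 p.2 * Real.exp (-(p.1 : ℝ) * (ε * x)) * Real.cos ((p.2 : ℝ) * (ω * t))) -
      ∑' p : ℕ × ℕ, -(ω ^ 2 * (p.2 : ℝ) ^ 2 *
      (a p.1 p.2 * Real.exp (-(p.1 : ℝ) * (ε * x)) * Real.cos ((p.2 : ℝ) * (ω * t)))) := by
    rw [hG, ← hsx.tsum_sub hst]
    refine tsum_congr fun p => ?_
    rw [hω2]
    ring
  rw [ht, hxx, hG']
  ring

theorem exp_neg_mul_le {d l ξ ξ₁ : ℝ} (h : ξ₁ ≤ ξ) (hl : d ≤ l) :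
    Real.exp (-l * ξ) ≤ Real.exp (-d * (ξ - ξ₁)) * Real.exp (-l * ξ₁) := by
  rw [← Real.exp_add]
  apply Real.exp_le_exp.2
  nlinarith [mul_nonneg (sub_nonneg.2 h) (sub_nonneg.2 hl)]

theorem modes_tendsto_zero (hε : 0 < ε)
    (hsupp : ∀ l s, a l s ≠ 0 → Odd l ∧ Odd s ∧ s ≤ l)
    (hsum : ∀ ξ : ℝ, ξ₀ < ξ →
      Summable fun p : ℕ × ℕ => |a p.1 p.2| * Real.exp (-(p.1 : ℝ) * ξ)) (ω : ℝ)
    (hu : ∀ x t, u x t = ∑' p : ℕ × ℕ, a p.1 p.2 * Real.exp (-(p.1 : ℝ) * (ε * x)) *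
      Real.cos ((p.2 : ℝ) * (ω * t))) (δ : ℝ) (hδ : 0 < δ) :
    ∃ A : ℝ, ∀ x t, A ≤ x → |u x t| < δ := by
  set ξ₁ := ξ₀ + 1 with hξ₁
  have hs := hsum ξ₁ (by linarith)
  set S := ∑' p : ℕ × ℕ, |a p.1 p.2| * Real.exp (-(p.1 : ℝ) * ξ₁) with hS
  have hlim : Filter.Tendsto (fun x : ℝ => Real.exp (-1 * (ε * x - ξ₁)) * S) Filter.atTop
      (nhds 0) := by
    rw [← zero_mul S]
    refine Filter.Tendsto.mul_const S (Real.tendsto_exp_atBot.comp ?_)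
    have h1 : Filter.Tendsto (fun x : ℝ => ε * x - ξ₁) Filter.atTop Filter.atTop :=
      Filter.tendsto_atTop_add_const_right _ _ (Filter.tendsto_id.const_mul_atTop hε)
    simpa only [neg_mul, one_mul] using! Filter.tendsto_neg_atTop_atBot.comp h1
  obtain ⟨A, hA⟩ := Filter.eventually_atTop.1
    ((hlim.eventually_lt_const hδ).and (Filter.eventually_ge_atTop (ξ₁ / ε)))
  refine ⟨A, fun x t hx => lt_of_le_of_lt ?_ (hA x hx).1⟩
  have hx1 : ξ₁ ≤ ε * x := (div_le_iff₀' hε).1 (hA x hx).2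
  rw [hu, ← Real.norm_eq_abs]
  refine tsum_of_norm_bounded (hs.hasSum.mul_left _) fun p => ?_
  by_cases hp : a p.1 p.2 = 0
  · simp [hp]
  · have hl : (1 : ℝ) ≤ p.1 := by exact_mod_cast (hsupp _ _ hp).1.pos
    have he := exp_neg_mul_le hx1 hl
    rw [Real.norm_eq_abs, abs_mul, abs_mul, Real.abs_exp]
    calc |a p.1 p.2| * Real.exp (-(p.1 : ℝ) * (ε * x)) * |Real.cos ((p.2 : ℝ) * (ω * t))|
        ≤ |a p.1 p.2| * Real.exp (-(p.1 : ℝ) * (ε * x)) :=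
          mul_le_of_le_one_right (by positivity) (Real.abs_cos_le_one _)
      _ ≤ |a p.1 p.2| * (Real.exp (-1 * (ε * x - ξ₁)) * Real.exp (-(p.1 : ℝ) * ξ₁)) := by gcongr
      _ = _ := by ring

theorem modes_ne_zero (hε : 0 < ε)
    (hsupp : ∀ l s, a l s ≠ 0 → Odd l ∧ Odd s ∧ s ≤ l) (ha : a 1 1 = ε)
    (hsum : ∀ ξ : ℝ, ξ₀ < ξ →
      Summable fun p : ℕ × ℕ => |a p.1 p.2| * Real.exp (-(p.1 : ℝ) * ξ)) (ω : ℝ)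
    (hu : ∀ x t, u x t = ∑' p : ℕ × ℕ, a p.1 p.2 * Real.exp (-(p.1 : ℝ) * (ε * x)) *
      Real.cos ((p.2 : ℝ) * (ω * t))) :
    ∃ x t, ξ₀ < ε * x ∧ u x t ≠ 0 := by
  set ξ₁ := ξ₀ + 1 with hξ₁
  have hs := hsum ξ₁ (by linarith)
  set S := ∑' p : ℕ × ℕ, |a p.1 p.2| * Real.exp (-(p.1 : ℝ) * ξ₁) with hS
  have hlim : Filter.Tendsto (fun y : ℝ => Real.exp (-y) * (Real.exp ξ₁ * S)) Filter.atTop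
      (nhds 0) := by
    rw [← zero_mul (Real.exp ξ₁ * S)]
    exact Filter.Tendsto.mul_const _ Real.tendsto_exp_neg_atTop_nhds_zero
  obtain ⟨y, hy, hy0⟩ :=
    ((hlim.eventually_lt_const hε).and (Filter.eventually_ge_atTop 0)).exists
  set ξ := ξ₁ + y with hξ
  have hξ0 : ξ₀ < ξ := by linarith
  have hx : ε * (ξ / ε) = ξ := mul_div_cancel₀ _ hε.ne'
  refine ⟨ξ / ε, 0, by rwa [hx], fun h0 => ?_⟩
  rw [hu, hx] at h0
  simp only [mul_zero, Real.cos_zero, mul_one] at h0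
  have hsξ : Summable fun p : ℕ × ℕ => a p.1 p.2 * Real.exp (-(p.1 : ℝ) * ξ) := by
    refine Summable.of_norm ((hsum ξ hξ0).congr fun p => ?_)
    rw [Real.norm_eq_abs, abs_mul, Real.abs_exp]
  have hrest := hsξ.tsum_eq_add_tsum_ite (1, 1)
  rw [h0] at hrest
  have hle : ‖∑' p : ℕ × ℕ, if p = (1, 1) then 0 else a p.1 p.2 * Real.exp (-(p.1 : ℝ) * ξ)‖ ≤
      Real.exp (-2 * (ξ - ξ₁)) * S := by
    refine tsum_of_norm_bounded (hs.hasSum.mul_left _) fun p => ?_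
    split_ifs with hp
    · rw [norm_zero]
      positivity
    · by_cases hp0 : a p.1 p.2 = 0
      · simp [hp0]
      · have hl : (2 : ℝ) ≤ p.1 := by
          obtain ⟨h1, h2, h3⟩ := hsupp _ _ hp0
          have : 2 ≤ p.1 := by
            by_contra hlt
            have := h1.pos
            have := h2.pos
            exact hp (Prod.ext (by simp only; omega) (by simp only; omega))
          exact_mod_cast this
        have he := exp_neg_mul_le (show ξ₁ ≤ ξ by linarith) hl
        rw [Real.norm_eq_abs, abs_mul, Real.abs_exp]
        calc |a p.1 p.2| * Real.exp (-(p.1 : ℝ) * ξ)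
            ≤ |a p.1 p.2| * (Real.exp (-2 * (ξ - ξ₁)) * Real.exp (-(p.1 : ℝ) * ξ₁)) := by gcongr
          _ = _ := by ring
  have hval : ∑' p : ℕ × ℕ, (if p = (1, 1) then 0 else a p.1 p.2 * Real.exp (-(p.1 : ℝ) * ξ)) =
      -(ε * Real.exp (-ξ)) := by
    simp only [ha, Nat.cast_one, neg_mul, one_mul] at hrest ⊢
    linarith
  rw [hval, norm_neg, Real.norm_of_nonneg (by positivity)] at hle
  have hfac : Real.exp (-2 * (ξ - ξ₁)) * S =
      Real.exp (-y) * (Real.exp ξ₁ * S) * Real.exp (-ξ) := by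
    have : Real.exp (-2 * (ξ - ξ₁)) = Real.exp (-y) * Real.exp ξ₁ * Real.exp (-ξ) := by
      rw [← Real.exp_add, ← Real.exp_add, hξ]
      congr 1
      ring
    rw [this]
    ring
  rw [hfac] at hle
  exact absurd (le_of_mul_le_mul_right hle (Real.exp_pos _)) (not_le.2 hy)

end Series

end FormalSolution

/-- Theorem 4, convergence of the second formal solution: Let
`g(u) = Σ_{m odd} g_m u^m` be odd, entire, with `g₁ = 1` and `|g_m| ≤ α^{m−1}/m!` for all
odd `m` and some `α > 0`. Then for every `ε ∈ (0,1)` there are `ξ₀ ∈ ℝ` and coefficients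
`a_{l,s}` (supported on odd `l,s` with `s ≤ l`, `a_{1,1} = ε`) such that
`Σ |a_{l,s}| e^{−lξ} < ∞` for `ξ > ξ₀`, and
`u(x,t) = Σ a_{l,s} e^{−lεx} cos(s√(1−ε²)t)` solves `u_tt − u_xx + g(u) = 0` on
`{εx > ξ₀}`; in particular `u` is periodic in `t` with period `2π/√(1−ε²)`, tends to `0`
as `x → +∞`, and is not identically zero. -/
theorem convergence_second_formal_solution (g : ℕ → ℝ) (hg1 : g 1 = 1)
    (hodd : ∀ m, ¬ Odd m → g m = 0)
    (α : ℝ) (hα : 0 < α)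
    (hbound : ∀ m, Odd m → |g m| ≤ α ^ (m - 1) / Nat.factorial m) :
    ∀ ε : ℝ, 0 < ε → ε < 1 →
      ∃ (ξ₀ : ℝ) (a : ℕ → ℕ → ℝ),
        (∀ l s, a l s ≠ 0 → Odd l ∧ Odd s ∧ s ≤ l) ∧
        a 1 1 = ε ∧
        (∀ ξ : ℝ, ξ₀ < ξ →
          Summable fun p : ℕ × ℕ => |a p.1 p.2| * Real.exp (-(p.1 : ℝ) * ξ)) ∧
        (∀ u : ℝ → ℝ → ℝ,
          (∀ x t, u x t = ∑' p : ℕ × ℕ,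
            a p.1 p.2 * Real.exp (-(p.1 : ℝ) * (ε * x)) *
              Real.cos ((p.2 : ℝ) * (Real.sqrt (1 - ε ^ 2) * t))) →
          (∀ x t : ℝ, ξ₀ < ε * x →
            deriv (deriv fun t' => u x t') t - deriv (deriv fun x' => u x' t) x
              + ∑' m : ℕ, g m * u x t ^ m = 0) ∧
          (∀ x t, u x (t + 2 * Real.pi / Real.sqrt (1 - ε ^ 2)) = u x t) ∧
          (∀ δ > 0, ∃ A : ℝ, ∀ x t, A ≤ x → |u x t| < δ) ∧
          (∃ x t, ξ₀ < ε * x ∧ u x t ≠ 0)) := by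
  intro ε hε hε1
  obtain ⟨ξ₀, a, hsupp, ha11, hsum, heq⟩ := FormalSolution.exists_modes hg1 hodd hα hbound hε hε1
  refine ⟨ξ₀, a, hsupp, ha11, hsum, fun u hu => ⟨?_, ?_, ?_, ?_⟩⟩
  · intro x t hx
    refine FormalSolution.modes_solve_equation (by nlinarith) hε hsupp hsum hu hx ?_
    rw [hu]
    exact heq (ε * x) _ hx
  · intro x t
    have hω : 0 < Real.sqrt (1 - ε ^ 2) := Real.sqrt_pos.2 (by nlinarith)
    rw [hu, hu]
    refine tsum_congr fun p => ?_
    rw [mul_add, mul_div_cancel₀ _ hω.ne', mul_add, Real.cos_add_nat_mul_two_pi]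
  · exact FormalSolution.modes_tendsto_zero hε hsupp hsum _ hu
  · exact FormalSolution.modes_ne_zero hε hsupp ha11 hsum _ hu
end
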